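/- arXiv:0907.1020 — 2 statements merged into one kernel-verified Lean document; each statement's English description precedes it below -/
import Mathlib

section
/- Under Assumptions 1.1, 1.2 and 1.3, almost surely on the event Λ = {sup_{n≥0} ‖θ_n‖ < ∞} the limit θ̂ = lim_{n→∞} θ_n exists and satisfies ∇f(θ̂) = 0. -/
open MeasureTheory Filter

lemma sgc_abel {E : Type*} [NormedAddCommGroup E] [NormedSpace ℝ E] (z : ℕ → E) (b : ℕ → ℝ) (n M : ℕ) (C : ℝ)
    (hb0 : ∀ i, n ≤ i → 0 ≤ b i) (hb : ∀ i, n ≤ i → b (i+1) ≤ b i)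
    (hs : ∀ m, n ≤ m → m ≤ M → ‖∑ i ∈ Finset.Ico n m, z i‖ ≤ C) :
    ∀ m, n ≤ m → m ≤ M → ‖∑ i ∈ Finset.Ico n m, b i • z i‖ ≤ C * b n := by
  have key : ∀ m, n ≤ m → m ≤ M →
      ‖∑ i ∈ Finset.Ico n m, b i • z i - b m • ∑ i ∈ Finset.Ico n m, z i‖ ≤ C * (b n - b m) := by
    intro m hm
    induction m, hm using Nat.le_induction with
    | base => intro _; simp
    | succ m hm ih =>
      intro hM
      have h1 := ih (by omega)
      have h2 := hs (m+1) (by omega) hM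
      have e : ∑ i ∈ Finset.Ico n (m+1), b i • z i - b (m+1) • ∑ i ∈ Finset.Ico n (m+1), z i
          = (∑ i ∈ Finset.Ico n m, b i • z i - b m • ∑ i ∈ Finset.Ico n m, z i)
            + (b m - b (m+1)) • ∑ i ∈ Finset.Ico n (m+1), z i := by
        rw [Finset.sum_Ico_succ_top hm, Finset.sum_Ico_succ_top hm]
        module
      rw [e]
      refine (norm_add_le _ _).trans ?_
      rw [norm_smul, Real.norm_of_nonneg (sub_nonneg.2 (hb m hm))]
      have := mul_le_mul_of_nonneg_left h2 (sub_nonneg.2 (hb m hm))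
      linarith
  intro m hm hM
  have h1 := key m hm hM
  have h2 := hs m hm hM
  have h3 : ‖b m • ∑ i ∈ Finset.Ico n m, z i‖ ≤ b m * C := by
    rw [norm_smul, Real.norm_of_nonneg (hb0 m hm)]
    exact mul_le_mul_of_nonneg_left h2 (hb0 m hm)
  have := norm_le_norm_sub_add (∑ i ∈ Finset.Ico n m, b i • z i) (b m • ∑ i ∈ Finset.Ico n m, z i)
  linarith

lemma sgc_descent {d : ℕ} (f : EuclideanSpace ℝ (Fin d) → ℝ) (hfd : Differentiable ℝ f)
    (s : Set (EuclideanSpace ℝ (Fin d))) (hs : Convex ℝ s) (L : ℝ) (hL : 0 ≤ L)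
    (hlip : ∀ x ∈ s, ∀ y ∈ s, ‖gradient f x - gradient f y‖ ≤ L * ‖x - y‖)
    (x y : EuclideanSpace ℝ (Fin d)) (hx : x ∈ s) (hy : y ∈ s) :
    f y ≤ f x + inner ℝ (gradient f x) (y - x) + L * ‖y - x‖ ^ 2 := by
  have hseg : segment ℝ x y ⊆ s := hs.segment_subset hx hy
  have h := Convex.norm_image_sub_le_of_norm_hasFDerivWithin_le' (𝕜 := ℝ) (f := f)
    (f' := fun z => (InnerProductSpace.toDual ℝ _) (gradient f z))
    (φ := (InnerProductSpace.toDual ℝ _) (gradient f x)) (C := L * ‖y - x‖) (s := segment ℝ x y) (x := x) (y := y)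
    (fun z hz => ((hfd z).hasGradientAt.hasFDerivAt).hasFDerivWithinAt) ?_ (convex_segment x y)
    (left_mem_segment ℝ x y) (right_mem_segment ℝ x y)
  · rw [InnerProductSpace.toDual_apply_apply] at h
    have := (le_abs_self _).trans h
    nlinarith
  · intro z hz
    rw [← map_sub, LinearIsometryEquiv.norm_map]
    refine (hlip z (hseg hz) x hx).trans (mul_le_mul_of_nonneg_left ?_ hL)
    obtain ⟨a, b, ha, hb, hab, rfl⟩ := hz
    have : a • x + b • y - x = b • (y - x) := by
      have : a = 1 - b := by linarith
      subst this; module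
    rw [this, norm_smul, Real.norm_of_nonneg hb]
    have : b ≤ 1 := by linarith
    nlinarith [norm_nonneg (y - x)]

lemma sgc_block {d : ℕ} (f : EuclideanSpace ℝ (Fin d) → ℝ) (hfd : Differentiable ℝ f)
    (s : Set (EuclideanSpace ℝ (Fin d))) (hs : Convex ℝ s) (L : ℝ) (hL : 0 ≤ L)
    (hlip : ∀ x ∈ s, ∀ y ∈ s, ‖gradient f x - gradient f y‖ ≤ L * ‖x - y‖)
    (α : ℕ → ℝ) (hαpos : ∀ n, 0 < α n) (θ ξ : ℕ → EuclideanSpace ℝ (Fin d))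
    (hrec : ∀ n, θ (n + 1) = θ n - α n • (gradient f (θ n) + ξ n))
    (hθ : ∀ n, θ n ∈ s) (n m : ℕ) (hnm : n ≤ m) (T ε : ℝ) (hTdef : T = ∑ i ∈ Finset.Ico n m, α i)
    (hT0 : 0 < T) (hTL : T * L ≤ 1 / 32) (hε : 0 ≤ ε)
    (hnoise : ∀ k, n ≤ k → k ≤ m → ‖∑ i ∈ Finset.Ico n k, α i • ξ i‖ ≤ ε) :
    (∀ k, n ≤ k → k ≤ m → ‖θ k - θ n‖ ≤ 2 * (T * ‖gradient f (θ n)‖ + ε)) ∧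
    f (θ m) ≤ f (θ n) - T / 4 * ‖gradient f (θ n)‖ ^ 2 + (8 * L + 4 / T) * ε ^ 2 := by
  set g := ‖gradient f (θ n)‖ with hg
  have hg0 : 0 ≤ g := norm_nonneg _
  have hsum : ∀ k, n ≤ k → θ k - θ n = -(∑ i ∈ Finset.Ico n k, α i • gradient f (θ i))
      - ∑ i ∈ Finset.Ico n k, α i • ξ i := by
    intro k hk
    induction k, hk using Nat.le_induction with
    | base => simp
    | succ k hk ih =>
      rw [Finset.sum_Ico_succ_top hk, Finset.sum_Ico_succ_top hk, hrec,
        show θ k - α k • (gradient f (θ k) + ξ k) - θ n = (θ k - θ n) - α k • (gradient f (θ k) + ξ k) by abel, ih]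
      module
  have hTk : ∀ k, k ≤ m → ∑ i ∈ Finset.Ico n k, α i ≤ T := by
    intro k hk
    rw [hTdef]
    exact Finset.sum_le_sum_of_subset_of_nonneg (Finset.Ico_subset_Ico_right hk)
      (fun i _ _ => (hαpos i).le)
  have hD : ∀ k, n ≤ k → k ≤ m → ‖θ k - θ n‖ ≤ 2 * (T * g + ε) := by
    intro k
    induction k using Nat.strong_induction_on with
    | _ k ih =>
      intro hk hkm
      have h1 : ‖∑ i ∈ Finset.Ico n k, α i • gradient f (θ i)‖ ≤ T * (g + L * (2 * (T * g + ε))) := by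
        refine (norm_sum_le _ _).trans ?_
        have : ∀ i ∈ Finset.Ico n k, ‖α i • gradient f (θ i)‖ ≤ α i * (g + L * (2 * (T * g + ε))) := by
          intro i hi
          rw [Finset.mem_Ico] at hi
          rw [norm_smul, Real.norm_of_nonneg (hαpos i).le]
          refine mul_le_mul_of_nonneg_left ?_ (hαpos i).le
          have h2 := ih i hi.2 hi.1 (by omega)
          have h3 := hlip _ (hθ i) _ (hθ n)
          have h4 := norm_le_norm_sub_add (gradient f (θ i)) (gradient f (θ n))
          have h5 := mul_le_mul_of_nonneg_left h2 hL
          linarith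
        refine (Finset.sum_le_sum this).trans ?_
        rw [← Finset.sum_mul]
        exact mul_le_mul_of_nonneg_right (hTk k hkm) (by positivity)
      rw [hsum k hk]
      refine (norm_sub_le _ _).trans ?_
      rw [norm_neg]
      have h6 := hnoise k hk hkm
      have h7 : T * L * (2 * (T * g + ε)) ≤ 1 / 32 * (2 * (T * g + ε)) :=
        mul_le_mul_of_nonneg_right hTL (by positivity)
      have : 0 ≤ T * g := by positivity
      nlinarith
  refine ⟨hD, ?_⟩
  have hE : ‖(θ m - θ n) + T • gradient f (θ n)‖ ≤ T / 16 * g + 2 * ε := by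
    have e : (θ m - θ n) + T • gradient f (θ n) =
        -(∑ i ∈ Finset.Ico n m, α i • (gradient f (θ i) - gradient f (θ n)))
        - ∑ i ∈ Finset.Ico n m, α i • ξ i := by
      rw [hsum m hnm, hTdef, Finset.sum_smul]
      simp only [smul_sub, Finset.sum_sub_distrib]
      abel
    rw [e]
    refine (norm_sub_le _ _).trans ?_
    rw [norm_neg]
    have h1 : ‖∑ i ∈ Finset.Ico n m, α i • (gradient f (θ i) - gradient f (θ n))‖
        ≤ T * (L * (2 * (T * g + ε))) := by
      refine (norm_sum_le _ _).trans ?_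
      have : ∀ i ∈ Finset.Ico n m, ‖α i • (gradient f (θ i) - gradient f (θ n))‖ ≤
          α i * (L * (2 * (T * g + ε))) := by
        intro i hi
        rw [Finset.mem_Ico] at hi
        rw [norm_smul, Real.norm_of_nonneg (hαpos i).le]
        refine mul_le_mul_of_nonneg_left ?_ (hαpos i).le
        exact (hlip _ (hθ i) _ (hθ n)).trans
          (mul_le_mul_of_nonneg_left (hD i hi.1 hi.2.le) hL)
      refine (Finset.sum_le_sum this).trans ?_
      rw [← Finset.sum_mul, ← hTdef]
    have h6 := hnoise m hnm le_rfl
    have h7 : T * L * (2 * (T * g + ε)) ≤ 1 / 32 * (2 * (T * g + ε)) :=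
        mul_le_mul_of_nonneg_right hTL (by positivity)
    nlinarith
  have hdes := sgc_descent f hfd s hs L hL hlip (θ n) (θ m) (hθ n) (hθ m)
  have hin : inner ℝ (gradient f (θ n)) (θ m - θ n) ≤ - T * g ^ 2 + g * (T / 16 * g + 2 * ε) := by
    have e : θ m - θ n = ((θ m - θ n) + T • gradient f (θ n)) - T • gradient f (θ n) := by abel
    rw [e, inner_sub_right, inner_smul_right, real_inner_self_eq_norm_sq]
    have := (real_inner_le_norm (gradient f (θ n)) ((θ m - θ n) + T • gradient f (θ n))).trans
      (mul_le_mul_of_nonneg_left hE hg0)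
    linarith
  have hsq : L * ‖θ m - θ n‖ ^ 2 ≤ T * g ^ 2 / 4 + 8 * L * ε ^ 2 := by
    have h1 : ‖θ m - θ n‖ ^ 2 ≤ (2 * (T * g + ε)) ^ 2 :=
      pow_le_pow_left₀ (norm_nonneg _) (hD m hnm le_rfl) 2
    have h2 : (2 * (T * g + ε)) ^ 2 ≤ 8 * (T ^ 2 * g ^ 2) + 8 * ε ^ 2 := by
      nlinarith [sq_nonneg (T * g - ε)]
    have h3 := mul_le_mul_of_nonneg_left (h1.trans h2) hL
    have h4 : (T * L) * (8 * T * g ^ 2) ≤ 1 / 32 * (8 * T * g ^ 2) :=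
      mul_le_mul_of_nonneg_right hTL (by positivity)
    nlinarith
  have hge : 2 * g * ε ≤ T * g ^ 2 / 4 + 4 / T * ε ^ 2 := by
    have : T * g ^ 2 / 4 + 4 / T * ε ^ 2 - 2 * g * ε = (T * g / 2 - 2 * ε) ^ 2 / T := by
      field_simp; ring
    have h2 : 0 ≤ (T * g / 2 - 2 * ε) ^ 2 / T := by positivity
    linarith
  have : 0 ≤ T * g ^ 2 := by positivity
  nlinarith

/-- Bernoulli / concavity. -/
lemma sgc_concave (p x y : ℝ) (hp0 : 0 ≤ p) (hp1 : p ≤ 1) (hx : 0 < x) (hy : 0 ≤ y) :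
    p * x ^ (p - 1) * (x - y) ≤ x ^ p - y ^ p := by
  have h := rpow_one_add_le_one_add_mul_self (s := y / x - 1) (p := p)
    (by have : 0 ≤ y / x := by positivity
        linarith) hp0 hp1
  have h1 : (1 + (y / x - 1)) = y / x := by ring
  rw [h1, Real.div_rpow hy hx.le, div_le_iff₀ (by positivity)] at h
  rw [Real.rpow_sub_one hx.ne']
  have : p * (x ^ p / x) * (x - y) = x ^ p - (1 + p * (y / x - 1)) * x ^ p := by
    field_simp; ring
  linarith

lemma sgc_series (ε R v g : ℕ → ℝ) (c M μ K B : ℝ) (hc : 0 < c) (hM : 0 < M) (hμ : 1 < μ)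
    (hε : ∀ j, 0 < ε j) (hεa : ∀ j, ε (j + 1) ≤ ε j) (hεs : Summable ε)
    (hR0 : ∀ j, 0 ≤ R j) (hR : ∀ j, R j - R (j + 1) = K * ε j ^ 2) (hK : 0 ≤ K)
    (hRB : ∀ j, R j ≤ B * ε j)
    (hv0 : ∀ j, 0 ≤ v j) (hg0 : ∀ j, 0 ≤ g j)
    (hv : ∀ j, v (j + 1) ≤ v j - c * g j ^ 2)
    (hL : ∀ j, v j ≤ M * g j ^ μ + R j) : Summable g := by
  set p : ℝ := 1 - 1 / μ with hp
  have hμ0 : 0 < μ := by linarith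
  have hp0 : 0 < p := by
    rw [hp, sub_pos, div_lt_one hμ0]; exact hμ
  have hp1 : p ≤ 1 := by
    have : 0 < 1 / μ := by positivity
    linarith
  set A : ℝ := (2 * M) ^ (1 / μ) with hA
  have hA0 : 0 < A := by positivity
  have hvm : ∀ j, v (j + 1) ≤ v j := fun j => (hv j).trans (by nlinarith [sq_nonneg (g j)])
  set Q : ℕ → ℝ := fun j => min (v j) (2 * R j) with hQ
  have hRm : ∀ j, R (j + 1) ≤ R j := fun j => by
    have := hR j
    have h2 : 0 ≤ K * ε j ^ 2 := by positivity
    linarith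
  have hQm : ∀ j, Q (j + 1) ≤ Q j := fun j => min_le_min (hvm j) (by linarith [hRm j])
  -- pointwise bound
  have hpt : ∀ j, g j ≤ A / (p * c) * (v j ^ p - v (j + 1) ^ p) + ε j + 1 / c * ((Q j - Q (j + 1)) / ε j) := by
    intro j
    have t1 : 0 ≤ v j ^ p - v (j + 1) ^ p :=
      sub_nonneg.2 (Real.rpow_le_rpow (hv0 _) (hvm j) hp0.le)
    have t1' : 0 ≤ A / (p * c) * (v j ^ p - v (j + 1) ^ p) := mul_nonneg (by positivity) t1
    have t2 : 0 ≤ 1 / c * ((Q j - Q (j + 1)) / ε j) :=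
      mul_nonneg (by positivity) (div_nonneg (sub_nonneg.2 (hQm j)) (hε j).le)
    have t3 := hε j
    rcases le_or_gt (v j) (2 * R j) with h | h
    · have e1 : Q j = v j := min_eq_left h
      have e2 : Q (j + 1) ≤ v (j + 1) := min_le_left _ _
      have h1 : c * g j ^ 2 ≤ Q j - Q (j + 1) := by have := hv j; linarith
      have h2 : g j ^ 2 / ε j ≤ 1 / c * ((Q j - Q (j + 1)) / ε j) := by
        rw [← mul_div_assoc]
        refine div_le_div_of_nonneg_right ?_ t3.le
        rw [one_div, ← div_eq_inv_mul, le_div_iff₀ hc]; linarith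
      have h3 : g j ≤ ε j + g j ^ 2 / ε j := by
        have : ε j + g j ^ 2 / ε j - g j = ((g j - ε j / 2) ^ 2 + 3 / 4 * ε j ^ 2) / ε j := by
          field_simp; ring
        have h4 : 0 ≤ ((g j - ε j / 2) ^ 2 + 3 / 4 * ε j ^ 2) / ε j := by positivity
        linarith
      linarith
    · have hvp : 0 < v j := by have := hR0 j; linarith
      have h1 : v j ≤ 2 * M * g j ^ μ := by have := hL j; linarith
      have hgp : 0 < g j := by
        rcases (hg0 j).lt_or_eq with h' | h'
        · exact h'
        · rw [← h', Real.zero_rpow hμ0.ne'] at h1; linarith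
      have h2 : v j ^ (1 / μ) ≤ A * g j := by
        have := Real.rpow_le_rpow hvp.le h1 (by positivity : 0 ≤ 1 / μ)
        rwa [Real.mul_rpow (by positivity) (by positivity), ← Real.rpow_mul hgp.le,
          mul_one_div_cancel hμ0.ne', Real.rpow_one] at this
      have h3 := sgc_concave p (v j) (v (j + 1)) hp0.le hp1 hvp (hv0 _)
      have h4 : v j ^ (p - 1) = (v j ^ (1 / μ))⁻¹ := by
        rw [← Real.rpow_neg hvp.le]; congr 1; rw [hp]; ring
      have h5 : (A * g j)⁻¹ ≤ v j ^ (p - 1) := by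
        rw [h4]
        exact inv_anti₀ (by positivity) h2
      have h6 : c * g j ^ 2 ≤ v j - v (j + 1) := by have := hv j; linarith
      have h7 : p * (A * g j)⁻¹ * (c * g j ^ 2) ≤ v j ^ p - v (j + 1) ^ p := by
        refine le_trans ?_ h3
        gcongr
      have h8 : A / (p * c) * (p * (A * g j)⁻¹ * (c * g j ^ 2)) = g j := by
        field_simp
      have h9 := mul_le_mul_of_nonneg_left h7 (by positivity : 0 ≤ A / (p * c))
      rw [h8] at h9
      linarith
  -- summation of the weighted term
  have hsumQ : ∀ N, ∑ j ∈ Finset.range N, (Q j - Q (j + 1)) / ε j ≤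
      (Q 0 - 2 * R 0) / ε 0 - (Q N - 2 * R N) / ε N + 2 * K * ∑ j ∈ Finset.range N, ε j := by
    intro N
    induction N with
    | zero => simp
    | succ N ih =>
      rw [Finset.sum_range_succ, Finset.sum_range_succ]
      have hq : Q (N + 1) - 2 * R (N + 1) ≤ 0 := sub_nonpos.2 (min_le_right _ _)
      have h1 : (Q (N + 1) - 2 * R (N + 1)) / ε (N + 1) ≤ (Q (N + 1) - 2 * R (N + 1)) / ε N := by
        rw [div_eq_mul_inv, div_eq_mul_inv]
        exact mul_le_mul_of_nonpos_left (inv_anti₀ (hε _) (hεa N)) hq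
      have h2 : (R N - R (N + 1)) / ε N = K * ε N := by
        rw [hR N]; have := (hε N).ne'; field_simp
      have h3 : (Q N - Q (N + 1)) / ε N = (Q N - 2 * R N) / ε N - (Q (N + 1) - 2 * R (N + 1)) / ε N
          + 2 * ((R N - R (N + 1)) / ε N) := by
        have := (hε N).ne'; field_simp; ring
      rw [h2] at h3
      linarith
  have hQ0 : ∀ j, 0 ≤ Q j := fun j => le_min (hv0 j) (by linarith [hR0 j])
  refine summable_of_sum_range_le (c := A / (p * c) * v 0 ^ p + ∑' j, ε j +
    1 / c * (2 * B + 2 * K * ∑' j, ε j)) hg0 ?_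
  intro N
  refine (Finset.sum_le_sum (fun j _ => hpt j)).trans ?_
  rw [Finset.sum_add_distrib, Finset.sum_add_distrib, ← Finset.mul_sum, ← Finset.mul_sum,
    Finset.sum_range_sub' (fun j => v j ^ p)]
  have b1 : ∑ j ∈ Finset.range N, ε j ≤ ∑' j, ε j := hεs.sum_le_tsum _ (fun j _ => (hε j).le)
  have b2 : ∑ j ∈ Finset.range N, (Q j - Q (j + 1)) / ε j ≤ 2 * B + 2 * K * ∑' j, ε j := by
    refine (hsumQ N).trans ?_
    have c1 : (Q 0 - 2 * R 0) / ε 0 ≤ 0 :=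
      div_nonpos_of_nonpos_of_nonneg (sub_nonpos.2 (min_le_right _ _)) (hε 0).le
    have c2 : -((Q N - 2 * R N) / ε N) ≤ 2 * B := by
      rw [← neg_div, div_le_iff₀ (hε N)]
      have := hRB N; have := hQ0 N; linarith
    have c3 : 2 * K * ∑ j ∈ Finset.range N, ε j ≤ 2 * K * ∑' j, ε j :=
      mul_le_mul_of_nonneg_left b1 (by positivity)
    linarith
  have b3 : 0 ≤ v N ^ p := Real.rpow_nonneg (hv0 N) p
  have b4 : A / (p * c) * (v 0 ^ p - v N ^ p) ≤ A / (p * c) * v 0 ^ p :=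
    mul_le_mul_of_nonneg_left (by linarith) (by positivity)
  have b5 := mul_le_mul_of_nonneg_left b2 (by positivity : 0 ≤ 1 / c)
  linarith

lemma sgc_path {d : ℕ} (f : EuclideanSpace ℝ (Fin d) → ℝ) (hfd : Differentiable ℝ f)
    (hlip : LocallyLipschitz (fun x => gradient f x))
    (α : ℕ → ℝ) (hαpos : ∀ n, 0 < α n)
    (θ ξ : ℕ → EuclideanSpace ℝ (Fin d))
    (hrec : ∀ n, θ (n + 1) = θ n - α n • (gradient f (θ n) + ξ n))
    (hα0 : Tendsto α atTop (nhds 0))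
    (γ : ℕ → ℝ) (hγ : ∀ n, γ n = ∑ i ∈ Finset.range n, α i)
    (hαdiv : Tendsto γ atTop atTop)
    (r : ℝ) (hr : 1 < r) (ρ : ℝ) (hρ : ∀ n, ‖θ n‖ ≤ ρ) (C₀ : ℝ) (N₀ : ℕ)
    (hnoise : ∀ n, N₀ ≤ n → ∀ k, n ≤ k → γ (k + 1) - γ n ≤ 1 →
      ‖∑ i ∈ Finset.Icc n k, (α i * γ i ^ r) • ξ i‖ ≤ C₀)
    (hLoj : ∀ Q : Set (EuclideanSpace ℝ (Fin d)), IsCompact Q → ∀ b ∈ f '' Q,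
      ∃ δ μ M : ℝ, δ ∈ Set.Ioc (0 : ℝ) 1 ∧ μ ∈ Set.Ioc (1 : ℝ) 2 ∧ 1 ≤ M ∧
        ∀ x ∈ Q, |f x - b| ≤ δ → |f x - b| ≤ M * ‖gradient f x‖ ^ μ) :
    ∃ θhat, Tendsto θ atTop (nhds θhat) ∧ gradient f θhat = 0 := by
  set s : Set (EuclideanSpace ℝ (Fin d)) := Metric.closedBall 0 ρ with hs
  have hsc : IsCompact s := isCompact_closedBall 0 ρ
  have hconv : Convex ℝ s := convex_closedBall 0 ρ
  have hθs : ∀ n, θ n ∈ s := fun n => by simpa [hs] using hρ n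
  obtain ⟨L, hL0, hL⟩ : ∃ L : ℝ, 0 ≤ L ∧ ∀ x ∈ s, ∀ y ∈ s,
      ‖gradient f x - gradient f y‖ ≤ L * ‖x - y‖ := by
    obtain ⟨K, hK⟩ := (hlip.locallyLipschitzOn (s := s)).exists_lipschitzOnWith_of_compact hsc
    refine ⟨K, K.2, fun x hx y hy => ?_⟩
    have := hK.dist_le_mul x hx y hy
    simpa [dist_eq_norm] using this
  have hgcont : Continuous (fun x => gradient f x) := hlip.continuous
  have hfcont : Continuous f := hfd.continuous
  -- step length of blocks
  obtain ⟨τ, hτ0, hτ1, hτL⟩ : ∃ τ : ℝ, 0 < τ ∧ τ ≤ 1 ∧ τ * L ≤ 1 / 32 := by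
    refine ⟨1 / (32 * (L + 1)), by positivity, ?_, ?_⟩
    · rw [div_le_one (by positivity)]; linarith
    · rw [div_mul_eq_mul_div, div_le_div_iff₀ (by positivity) (by norm_num)]; linarith
  set C : ℝ := max C₀ 1 with hC
  have hC1 : 1 ≤ C := le_max_right _ _
  have hγs : ∀ n, γ (n + 1) = γ n + α n := fun n => by rw [hγ, hγ, Finset.sum_range_succ]
  have hγmono : StrictMono γ := strictMono_nat_of_lt_succ fun n => by
    rw [hγs]; linarith [hαpos n]
  have hγIco : ∀ n m, n ≤ m → ∑ i ∈ Finset.Ico n m, α i = γ m - γ n := fun n m h => by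
    rw [Finset.sum_Ico_eq_sub _ h, hγ, hγ]
  obtain ⟨N, hN0, hNα, hNγ⟩ : ∃ N, N₀ ≤ N ∧ (∀ n, N ≤ n → α n < τ / 2) ∧ τ / 2 ≤ γ N := by
    have h1 := hα0.eventually (gt_mem_nhds (by positivity : 0 < τ / 2))
    have h2 := hαdiv.eventually (eventually_ge_atTop (τ / 2))
    obtain ⟨N₁, h1⟩ := eventually_atTop.1 h1
    obtain ⟨N₂, h2⟩ := eventually_atTop.1 h2
    exact ⟨max N₀ (max N₁ N₂), by simp, fun n hn => h1 n (by simp at hn; omega), h2 _ (by simp)⟩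
  -- next block
  have hnext : ∀ n, N ≤ n → ∃ m, n < m ∧ τ / 2 ≤ γ m - γ n ∧ γ m - γ n ≤ τ := by
    intro n hn
    have hex : ∃ m, γ n + τ / 2 ≤ γ m := (hαdiv.eventually (eventually_ge_atTop _)).exists
    classical
    have h1 := Nat.find_spec hex
    have h2 : n < Nat.find hex := hγmono.lt_iff_lt.1 (by linarith)
    refine ⟨Nat.find hex, h2, by linarith, ?_⟩
    obtain ⟨k, hk⟩ : ∃ k, Nat.find hex = k + 1 := ⟨Nat.find hex - 1, by omega⟩
    have h3 := Nat.find_min hex (m := k) (by omega)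
    rw [hk, hγs]
    have h4 := hNα k (by omega)
    push Not at h3
    linarith
  choose! nx hnx1 hnx2 hnx3 using hnext
  set ν : ℕ → ℕ := fun j => nx^[j] N with hν
  have hνs : ∀ j, ν (j + 1) = nx (ν j) := fun j => Function.iterate_succ_apply' nx j N
  have hνN : ∀ j, N ≤ ν j := by
    intro j
    induction j with
    | zero => exact le_rfl
    | succ j ih => rw [hνs]; exact ih.trans (hnx1 _ ih).le
  have hνlt : ∀ j, ν j < ν (j + 1) := fun j => by rw [hνs]; exact hnx1 _ (hνN j)
  have hνmono : StrictMono ν := strictMono_nat_of_lt_succ hνlt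
  set T : ℕ → ℝ := fun j => γ (ν (j + 1)) - γ (ν j) with hT
  have hT1 : ∀ j, τ / 2 ≤ T j := fun j => by simp only [hT, hνs]; exact hnx2 _ (hνN j)
  have hT2 : ∀ j, T j ≤ τ := fun j => by simp only [hT, hνs]; exact hnx3 _ (hνN j)
  have hγν : ∀ j : ℕ, τ / 2 * (j + 1 : ℝ) ≤ γ (ν j) := by
    intro j
    induction j with
    | zero => simpa [hν] using hNγ
    | succ j ih =>
      have := hT1 j
      simp only [hT] at this
      push_cast
      linarith
  have hγpos : ∀ n, N ≤ n → 0 < γ n := fun n hn =>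
    lt_of_lt_of_le (by positivity : 0 < τ / 2) (hNγ.trans (hγmono.monotone hn))
  set ε : ℕ → ℝ := fun j => C * γ (ν j) ^ (-r) with hε
  have hε0 : ∀ j, 0 < ε j := fun j => by
    have := hγpos _ (hνN j)
    simp only [hε]; positivity
  have hεa : ∀ j, ε (j + 1) ≤ ε j := fun j => by
    refine mul_le_mul_of_nonneg_left ?_ (by linarith)
    exact Real.rpow_le_rpow_of_nonpos (hγpos _ (hνN j)) (hγmono.monotone (hνlt j).le) (by linarith)
  have hεs : Summable ε := by
    have h1 : Summable (fun j : ℕ => C * ((τ / 2) ^ (-r) * ((j + 1 : ℕ) : ℝ) ^ (-r))) := by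
      refine Summable.mul_left _ (Summable.mul_left _ ?_)
      exact (summable_nat_add_iff 1).2 (Real.summable_nat_rpow.2 (by linarith))
    refine Summable.of_nonneg_of_le (fun j => (hε0 j).le) (fun j => ?_) h1
    refine mul_le_mul_of_nonneg_left ?_ (by linarith)
    rw [← Real.mul_rpow (by positivity) (by positivity)]
    refine Real.rpow_le_rpow_of_nonpos (by positivity) ?_ (by linarith)
    push_cast
    exact hγν j
  -- noise on blocks
  have hnb : ∀ j k, ν j ≤ k → k ≤ ν (j + 1) → ‖∑ i ∈ Finset.Ico (ν j) k, α i • ξ i‖ ≤ ε j := by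
    intro j k hk1 hk2
    have h := sgc_abel (fun i => (α i * γ i ^ r) • ξ i) (fun i => γ i ^ (-r)) (ν j) (ν (j + 1)) C
      (fun i hi => Real.rpow_nonneg (hγpos i ((hνN j).trans hi)).le _)
      (fun i hi => Real.rpow_le_rpow_of_nonpos (hγpos i ((hνN j).trans hi))
        (hγmono.monotone (Nat.le_succ i)) (by linarith)) ?_ k hk1 hk2
    · refine le_of_eq_of_le ?_ h
      congr 1
      refine Finset.sum_congr rfl fun i hi => ?_
      have hi' := hγpos i ((hνN j).trans (Finset.mem_Ico.1 hi).1)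
      rw [smul_smul]
      congr 1
      rw [Real.rpow_neg hi'.le]
      have : γ i ^ r ≠ 0 := (Real.rpow_pos_of_pos hi' r).ne'
      field_simp
    · intro m hm1 hm2
      rcases hm1.eq_or_lt with h | h
      · rw [← h]; simp; linarith
      · obtain ⟨k', rfl⟩ : ∃ k', m = k' + 1 := ⟨m - 1, by omega⟩
        have e : Finset.Ico (ν j) (k' + 1) = Finset.Icc (ν j) k' := by
          ext i; simp only [Finset.mem_Ico, Finset.mem_Icc]; omega
        rw [e]
        refine (hnoise (ν j) (hN0.trans (hνN j)) k' (by omega) ?_).trans (le_max_left _ _)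
        have h1 := hγmono.monotone hm2
        have h2 := hT2 j
        simp only [hT] at h2
        linarith
  set x : ℕ → EuclideanSpace ℝ (Fin d) := fun j => θ (ν j) with hx
  set g : ℕ → ℝ := fun j => ‖gradient f (x j)‖ with hg
  have hg0 : ∀ j, 0 ≤ g j := fun j => norm_nonneg _
  set K : ℝ := 8 * L + 8 / τ with hK
  have hK0 : 0 ≤ K := by positivity
  have hblock : ∀ j, (∀ k, ν j ≤ k → k ≤ ν (j + 1) → ‖θ k - x j‖ ≤ 2 * (g j + ε j)) ∧
      f (x (j + 1)) ≤ f (x j) - τ / 8 * g j ^ 2 + K * ε j ^ 2 := by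
    intro j
    have hTp : 0 < T j := by have := hT1 j; linarith
    obtain ⟨h1, h2⟩ := sgc_block f hfd s hconv L hL0 hL α hαpos θ ξ hrec hθs (ν j) (ν (j + 1))
      (hνlt j).le (T j) (ε j) (hγIco _ _ (hνlt j).le).symm hTp
      ((mul_le_mul_of_nonneg_right (hT2 j) hL0).trans hτL) (hε0 j).le (hnb j)
    refine ⟨fun k hk1 hk2 => (h1 k hk1 hk2).trans ?_, ?_⟩
    · have : T j * g j ≤ 1 * g j := mul_le_mul_of_nonneg_right ((hT2 j).trans hτ1) (hg0 j)
      have e : ‖gradient f (θ (ν j))‖ = g j := rfl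
      rw [e]; linarith
    · have e : ‖gradient f (θ (ν j))‖ = g j := rfl
      rw [e] at h2
      have h3 : 4 / T j ≤ 8 / τ := by
        rw [div_le_div_iff₀ hTp hτ0]; have := hT1 j; linarith
      have h4 : (8 * L + 4 / T j) * ε j ^ 2 ≤ K * ε j ^ 2 :=
        mul_le_mul_of_nonneg_right (by rw [hK]; linarith) (sq_nonneg _)
      have h5 : τ / 8 * g j ^ 2 ≤ T j / 4 * g j ^ 2 :=
        mul_le_mul_of_nonneg_right (by have := hT1 j; linarith) (sq_nonneg _)
      change f (θ (ν (j + 1))) ≤ f (θ (ν j)) - _ + _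
      linarith
  -- the tail
  have hεanti : Antitone ε := antitone_nat_of_succ_le hεa
  have hε2 : Summable (fun j => ε j ^ 2) := by
    refine Summable.of_nonneg_of_le (fun j => sq_nonneg _) (fun j => ?_) (hεs.mul_left (ε 0))
    rw [sq]
    exact mul_le_mul_of_nonneg_right (hεanti (Nat.zero_le j)) (hε0 j).le
  set R : ℕ → ℝ := fun j => K * (∑' i, ε (i + j) ^ 2) with hRdef
  have hR0 : ∀ j, 0 ≤ R j := fun j => mul_nonneg hK0 (tsum_nonneg fun i => sq_nonneg _)
  have hR : ∀ j, R j - R (j + 1) = K * ε j ^ 2 := by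
    intro j
    have h1 := hε2.sum_add_tsum_nat_add j
    have h2 := hε2.sum_add_tsum_nat_add (j + 1)
    rw [Finset.sum_range_succ] at h2
    simp only [hRdef]
    rw [← mul_sub]
    congr 1
    linarith
  have hRB : ∀ j, R j ≤ (K * ∑' i, ε i) * ε j := by
    intro j
    have h1 : ∑' i, ε (i + j) ^ 2 ≤ ∑' i, ε i * ε j := by
      refine Summable.tsum_le_tsum (fun i => ?_) ((summable_nat_add_iff j).2 hε2) (hεs.mul_right _)
      rw [sq]
      exact mul_le_mul (hεanti (Nat.le_add_right i j)) (hεanti (Nat.le_add_left j i)) (hε0 _).le (hε0 _).le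
    rw [tsum_mul_right] at h1
    simp only [hRdef]
    rw [mul_assoc]
    exact mul_le_mul_of_nonneg_left h1 hK0
  have hεt : Tendsto ε atTop (nhds 0) := hεs.tendsto_atTop_zero
  have hRt : Tendsto R atTop (nhds 0) := by
    refine squeeze_zero hR0 hRB ?_
    simpa using hεt.const_mul (K * ∑' i, ε i)
  set V : ℕ → ℝ := fun j => f (x j) + R j with hV
  have hVd : ∀ j, V (j + 1) ≤ V j - τ / 8 * g j ^ 2 := fun j => by
    have h1 := (hblock j).2
    have h2 := hR j
    simp only [hV]; linarith
  have hVanti : Antitone V := antitone_nat_of_succ_le fun j => by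
    have := hVd j
    have h2 : 0 ≤ τ / 8 * g j ^ 2 := by positivity
    linarith
  have hxs : ∀ j, x j ∈ s := fun j => hθs _
  have himg : IsCompact (f '' s) := hsc.image hfcont
  obtain ⟨b, hVb⟩ : ∃ b, Tendsto V atTop (nhds b) := by
    refine ⟨_, tendsto_atTop_ciInf hVanti ?_⟩
    obtain ⟨m, hm⟩ := himg.bddBelow
    refine ⟨m, ?_⟩
    rintro _ ⟨j, rfl⟩
    have := hm ⟨x j, hxs j, rfl⟩
    have := hR0 j
    simp only [hV]; linarith
  have hfb : Tendsto (fun j => f (x j)) atTop (nhds b) := by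
    have := hVb.sub hRt
    simpa [hV] using this
  have hbmem : b ∈ f '' s := himg.isClosed.mem_of_tendsto hfb
    (Eventually.of_forall fun j => ⟨x j, hxs j, rfl⟩)
  obtain ⟨δ, μ, M, hδ, hμ, hM, hlj⟩ := hLoj s hsc b hbmem
  obtain ⟨J, hJ⟩ : ∃ J, ∀ j, J ≤ j → |f (x j) - b| ≤ δ := by
    have := (Metric.tendsto_nhds.1 hfb) δ hδ.1
    obtain ⟨J, hJ⟩ := eventually_atTop.1 this
    exact ⟨J, fun j hj => (hJ j hj).le⟩
  have hgs : Summable g := by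
    rw [← summable_nat_add_iff J]
    refine sgc_series (fun j => ε (j + J)) (fun j => R (j + J)) (fun j => V (j + J) - b)
      (fun j => g (j + J)) (τ / 8) M μ K (K * ∑' i, ε i) (by positivity) (by linarith) hμ.1
      (fun j => hε0 _) (fun j => ?_) ((summable_nat_add_iff J).2 hεs) (fun j => hR0 _) (fun j => ?_)
      hK0 (fun j => hRB _) (fun j => ?_) (fun j => hg0 _) (fun j => ?_) (fun j => ?_)
    · have := hεa (j + J)
      rwa [show j + 1 + J = j + J + 1 by ring]
    · have := hR (j + J)
      rwa [show j + 1 + J = j + J + 1 by ring]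
    · exact sub_nonneg.2 (hVanti.le_of_tendsto hVb _)
    · have := hVd (j + J)
      rw [show j + 1 + J = j + J + 1 by ring]
      linarith
    · have h1 := hlj (x (j + J)) (hxs _) (hJ _ (by omega))
      have h2 := le_abs_self (f (x (j + J)) - b)
      simp only [hV, hg]
      linarith
  have hbd : Summable (fun j => 2 * (g j + ε j)) := (hgs.add hεs).mul_left 2
  have hcs : CauchySeq x := by
    refine cauchySeq_of_summable_dist (Summable.of_nonneg_of_le (fun _ => dist_nonneg) (fun j => ?_) hbd)
    rw [dist_comm, dist_eq_norm]
    exact (hblock j).1 (ν (j + 1)) (hνlt j).le le_rfl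
  obtain ⟨xh, hxh⟩ := cauchySeq_tendsto_of_complete hcs
  refine ⟨xh, ?_, ?_⟩
  · rw [Metric.tendsto_atTop]
    intro η hη
    have h1 := (Metric.tendsto_nhds.1 hxh) (η / 2) (by positivity)
    have h2 := (hbd.tendsto_atTop_zero).eventually (gt_mem_nhds (by positivity : 0 < η / 2))
    obtain ⟨J₁, hJ₁⟩ := eventually_atTop.1 (h1.and h2)
    refine ⟨ν J₁, fun n hn => ?_⟩
    obtain ⟨j, hj, hj1, hj2⟩ : ∃ j, J₁ ≤ j ∧ ν j ≤ n ∧ n ≤ ν (j + 1) := by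
      have hex : ∃ j, n < ν (j + 1) := ⟨n, lt_of_lt_of_le (Nat.lt_succ_self n) (hνmono.id_le _)⟩
      classical
      have hsp := Nat.find_spec hex
      refine ⟨Nat.find hex, ?_, ?_, hsp.le⟩
      · have := hνmono.lt_iff_lt.1 (hn.trans_lt hsp)
        omega
      · by_cases h0 : Nat.find hex = 0
        · rw [h0]; exact (hνmono.monotone (Nat.zero_le J₁)).trans hn
        · have := Nat.find_min hex (m := Nat.find hex - 1) (by omega)
          rw [show Nat.find hex - 1 + 1 = Nat.find hex by omega] at this
          omega
    have h3 := (hblock j).1 n hj1 hj2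
    rw [← dist_eq_norm] at h3
    obtain ⟨h4, h5⟩ := hJ₁ j hj
    have := dist_triangle (θ n) (x j) xh
    linarith
  · have h1 : Tendsto g atTop (nhds ‖gradient f xh‖) :=
      ((hgcont.tendsto xh).comp hxh).norm
    have h2 := tendsto_nhds_unique h1 hgs.tendsto_atTop_zero
    exact norm_eq_zero.1 h2

/-- Theorem 1.1 of the paper:
under Assumptions 1.1, 1.2 and 1.3, almost surely on the event
`Λ = {sup_n ‖θ_n‖ < ∞}`, the limit `θ̂ = lim_n θ_n` exists and satisfies
`∇f(θ̂) = 0`. -/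
theorem stochastic_gradient_convergence
    {d : ℕ} (hd : 1 ≤ d)
    {Ω : Type} [MeasurableSpace Ω] (P : Measure Ω) [IsProbabilityMeasure P]
    (f : EuclideanSpace ℝ (Fin d) → ℝ)
    (hfd : Differentiable ℝ f)
    (hlip : LocallyLipschitz (fun x => gradient f x))
    (α : ℕ → ℝ) (hαpos : ∀ n, 0 < α n)
    (θ ξ : ℕ → Ω → EuclideanSpace ℝ (Fin d))
    (hrec : ∀ n ω, θ (n + 1) ω = θ n ω - α n • (gradient f (θ n ω) + ξ n ω))
    -- Assumption 1.1
    (hα0 : Tendsto α atTop (nhds 0))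
    (γ : ℕ → ℝ) (hγ : ∀ n, γ n = ∑ i ∈ Finset.range n, α i)
    (hαdiv : Tendsto γ atTop atTop)
    -- the interpolation index `a(n,t)`
    (a : ℕ → ℝ → ℕ)
    (ha : ∀ n t, 0 < t → a n t = sSup {k | n ≤ k ∧ γ k - γ n ≤ t})
    -- the event Λ
    (Λ : Set Ω) (hΛ : Λ = {ω | ∃ C, ∀ n, ‖θ n ω‖ ≤ C})
    -- Assumption 1.2
    (r : ℝ) (hr : 1 < r)
    (noise : ℕ → Ω → ℝ)
    (hnoise : ∀ n ω, noise n ω =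
      ⨆ k ∈ Set.Ico n (a n 1), ‖∑ i ∈ Finset.Icc n k, (α i * γ i ^ r) • ξ i ω‖)
    (hA12 : ∀ᵐ ω ∂P, ω ∈ Λ → IsBoundedUnder (· ≤ ·) atTop (fun n => noise n ω))
    -- Assumption 1.3 (Łojasiewicz-type gradient inequality)
    (hLoj : ∀ Q : Set (EuclideanSpace ℝ (Fin d)), IsCompact Q → ∀ b ∈ f '' Q,
      ∃ δ μ M : ℝ, δ ∈ Set.Ioc (0 : ℝ) 1 ∧ μ ∈ Set.Ioc (1 : ℝ) 2 ∧ 1 ≤ M ∧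
        ∀ x ∈ Q, |f x - b| ≤ δ → |f x - b| ≤ M * ‖gradient f x‖ ^ μ) :
    ∀ᵐ ω ∂P, ω ∈ Λ →
      ∃ θhat, Tendsto (fun n => θ n ω) atTop (nhds θhat) ∧ gradient f θhat = 0 := by
  have hγs : ∀ n, γ (n + 1) = γ n + α n := fun n => by rw [hγ, hγ, Finset.sum_range_succ]
  have hγmono : StrictMono γ := strictMono_nat_of_lt_succ fun n => by
    rw [hγs]; linarith [hαpos n]
  filter_upwards [hA12] with ω hω hωΛ
  obtain ⟨C₀, hC₀⟩ := hω hωΛ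
  obtain ⟨N₀, hN₀⟩ := eventually_atTop.1 (eventually_map.1 hC₀)
  have hmem := hωΛ
  rw [hΛ] at hmem
  obtain ⟨ρ, hρ⟩ := hmem
  refine sgc_path f hfd hlip α hαpos (fun n => θ n ω) (fun n => ξ n ω) (fun n => hrec n ω) hα0 γ hγ
    hαdiv r hr ρ hρ C₀ N₀ ?_ hLoj
  intro n hn k hnk hk
  refine le_trans ?_ (hN₀ n hn)
  have hka : k < a n 1 := by
    rw [ha n 1 one_pos]
    refine Nat.lt_of_succ_le (le_csSup ?_ ⟨by omega, hk⟩)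
    obtain ⟨B, hB⟩ := (hαdiv.eventually (eventually_gt_atTop (1 + γ n))).exists
    refine ⟨B, ?_⟩
    rintro m ⟨_, hm⟩
    by_contra! h
    have := hγmono h
    linarith
  rw [hnoise n ω]
  have hkm : k ∈ Set.Ico n (a n 1) := ⟨hnk, hka⟩
  have e : ‖∑ i ∈ Finset.Icc n k, (α i * γ i ^ r) • ξ i ω‖ =
      ⨆ (_ : k ∈ Set.Ico n (a n 1)), ‖∑ i ∈ Finset.Icc n k, (α i * γ i ^ r) • ξ i ω‖ := by
    haveI : Nonempty (k ∈ Set.Ico n (a n 1)) := ⟨hkm⟩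
    rw [ciSup_const]
  rw [e]
  refine le_ciSup (f := fun k => ⨆ (_ : k ∈ Set.Ico n (a n 1)),
    ‖∑ i ∈ Finset.Icc n k, (α i * γ i ^ r) • ξ i ω‖) ?_ k
  refine ⟨∑ k ∈ Finset.range (a n 1), ‖∑ i ∈ Finset.Icc n k, (α i * γ i ^ r) • ξ i ω‖, ?_⟩
  rintro _ ⟨m, rfl⟩
  refine Real.iSup_le (fun hm => ?_) (Finset.sum_nonneg fun _ _ => norm_nonneg _)
  exact Finset.single_le_sum (f := fun k => ‖∑ i ∈ Finset.Icc n k, (α i * γ i ^ r) • ξ i ω‖)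
    (fun _ _ => norm_nonneg _) (Finset.mem_range.2 hm.2)
end

section
/- Under Assumptions 1.1, 1.2 and 1.3, there exists a random variable K̂ with 1 ≤ K̂ < ∞ everywhere such that, almost surely on Λ = {sup_{n≥0} ‖θ_n‖ < ∞} (where θ̂ = lim_n θ_n exists): (1) limsup_{n→∞} γ_n^{p̂} ‖∇f(θ_n)‖² ≤ K̂ (φ(ξ))^{μ̂}; (2) limsup_{n→∞} γ_n^{p̂} |f(θ_n) − f(θ̂)| ≤ K̂ (φ(ξ))^{μ̂}; (3) limsup_{n→∞} γ_n^{q̂} ‖θ_n − θ̂‖ ≤ K̂ φ(ξ), where μ̂ = μ_{θ̂}, p̂ = p_{θ̂}, q̂ = q_{θ̂}, r̂ = r_{θ̂}, and φ(ξ) = ξ if r < r̂, φ(ξ) = 1 + ξ if r = r̂, φ(ξ) = 1 if r > r̂. -/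
open MeasureTheory Filter


namespace SGR

lemma tangent_neg {x y a : ℝ} (hx : 0 < x) (hy : 0 < y) (ha : 0 ≤ a) :
    x ^ (-a) - a * (y - x) * x ^ (-a - 1) ≤ y ^ (-a) := by
  have h1 : y / x ≤ Real.exp (y / x - 1) := by
    have := Real.add_one_le_exp (y / x - 1); linarith
  have h2 : (Real.exp (y / x - 1)) ^ (-a) ≤ (y / x) ^ (-a) :=
    Real.rpow_le_rpow_of_nonpos (by positivity) h1 (by linarith)
  rw [← Real.exp_mul] at h2
  have h3 := Real.add_one_le_exp ((y / x - 1) * (-a))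
  have h4 : 1 - a * (y / x - 1) ≤ (y / x) ^ (-a) := by linarith
  have h5 : y ^ (-a) = x ^ (-a) * (y / x) ^ (-a) := by
    rw [← Real.mul_rpow hx.le (by positivity)]
    congr 1; field_simp
  have h6 : x ^ (-a - 1) = x ^ (-a) / x := by
    rw [Real.rpow_sub hx, Real.rpow_one]
  rw [h5, h6]
  have h7 : 0 < x ^ (-a) := Real.rpow_pos_of_pos hx _
  calc x ^ (-a) - a * (y - x) * (x ^ (-a) / x) = x ^ (-a) * (1 - a * (y / x - 1)) := by
        field_simp
    _ ≤ _ := by gcongr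

lemma tangent_pos {x y ρ : ℝ} (hx : 0 < x) (hy : 0 < y) (hρ : 1 ≤ ρ) :
    y ^ ρ - ρ * (y - x) * y ^ (ρ - 1) ≤ x ^ ρ := by
  have h1 := one_add_mul_self_le_rpow_one_add (s := x / y - 1)
    (by have : 0 < x / y := by positivity
        linarith) hρ
  have h5 : x ^ ρ = y ^ ρ * (1 + (x / y - 1)) ^ ρ := by
    rw [← Real.mul_rpow hy.le (by have : 0 < x / y := by positivity
                                  linarith)]
    congr 1; field_simp; ring
  have h6 : y ^ (ρ - 1) = y ^ ρ / y := by
    rw [Real.rpow_sub hy, Real.rpow_one]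
  rw [h5, h6]
  have h7 : 0 < y ^ ρ := Real.rpow_pos_of_pos hy _
  calc y ^ ρ - ρ * (y - x) * (y ^ ρ / y) = y ^ ρ * (1 + ρ * (x / y - 1)) := by
        field_simp; ring
    _ ≤ _ := by gcongr

/-- comparison of powers at neighbouring times -/
lemma pow_compare {x y a : ℝ} (hx : 0 < x) (hxa : 4 * a ≤ x) (hxy : x ≤ y) (hy : y ≤ x + 1)
    (ha : 0 ≤ a) : 3 / 4 * x ^ (-a) ≤ y ^ (-a) := by
  have h := tangent_neg hx (hx.trans_le hxy) ha
  have h6 : x ^ (-a - 1) = x ^ (-a) / x := by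
    rw [Real.rpow_sub hx, Real.rpow_one]
  have h7 : 0 < x ^ (-a) := Real.rpow_pos_of_pos hx _
  have h8 : a * (y - x) * x ^ (-a - 1) ≤ 1 / 4 * x ^ (-a) := by
    rw [h6]
    have : a * (y - x) / x ≤ 1 / 4 := by
      rw [div_le_iff₀ hx]; nlinarith
    calc a * (y - x) * (x ^ (-a) / x) = a * (y - x) / x * x ^ (-a) := by ring
      _ ≤ _ := by gcongr
  linarith

lemma telescope {x y ρ σ : ℝ} (hx : 0 < x) (hρ : 1 < ρ) (hxa : 4 * ρ ≤ x) (hσ : 0 < σ)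
    (hxy : x + σ ≤ y) (hy : y ≤ x + 1) :
    x ^ (-ρ) ≤ 4 / 3 / ((ρ - 1) * σ) * (x ^ (1 - ρ) - y ^ (1 - ρ)) := by
  have h1 := pow_compare hx hxa (by linarith) hy (by linarith : (0:ℝ) ≤ ρ)
  have h2 := tangent_neg (x := y) (y := x) (by linarith) hx (by linarith : 0 ≤ ρ - 1)
  rw [show -(ρ - 1) = 1 - ρ by ring, show 1 - ρ - 1 = -ρ by ring] at h2
  have h7 : 0 < x ^ (-ρ) := Real.rpow_pos_of_pos hx _
  have h8 : (ρ - 1) * σ * y ^ (-ρ) ≤ (ρ - 1) * (y - x) * y ^ (-ρ) := by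
    have : 0 ≤ y ^ (-ρ) := Real.rpow_nonneg (by linarith) _
    have : 0 < ρ - 1 := by linarith
    gcongr; linarith
  have h9 : 0 < (ρ - 1) * σ := mul_pos (by linarith) hσ
  have h10 : (ρ - 1) * σ * (3 / 4 * x ^ (-ρ)) ≤ (ρ - 1) * σ * y ^ (-ρ) := by gcongr
  rw [div_div, div_mul_eq_mul_div, le_div_iff₀ (by positivity)]
  nlinarith

lemma chain_ind {m : ℕ → ℕ} {N n0 : ℕ} {P : ℕ → Prop} (hm : ∀ n ≥ N, n < m n) (h0 : N ≤ n0)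
    (hP0 : P n0) (hP : ∀ n ≥ n0, P n → P (m n)) :
    ∀ k ≥ n0, ∃ n ≥ n0, P n ∧ n ≤ k ∧ k < m n := by
  intro k hk
  induction k, hk using Nat.le_induction with
  | base => exact ⟨n0, le_rfl, hP0, le_rfl, hm _ h0⟩
  | succ k hk ih =>
    obtain ⟨n, hn, hPn, h1, h2⟩ := ih
    by_cases h : k + 1 < m n
    · exact ⟨n, hn, hPn, by omega, h⟩
    · have h3 : k + 1 = m n := by omega
      exact ⟨m n, by omega, hP n hn hPn, by omega, by rw [h3]; exact hm _ (by omega)⟩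

lemma chain_freq {m : ℕ → ℕ} {N n0 : ℕ} {P : ℕ → Prop} (hm : ∀ n ≥ N, n < m n) (h0 : N ≤ n0)
    (hP0 : P n0) (hP : ∀ n ≥ n0, P n → P (m n)) :
    ∃ᶠ n in atTop, P n := by
  rw [frequently_atTop]
  intro b
  obtain ⟨n, hn, hPn, h1, h2⟩ := chain_ind hm h0 hP0 hP (max b n0) (le_max_right _ _)
  exact ⟨m n, (le_max_left _ _).trans h2.le, hP n hn hPn⟩

/-- time structure -/
structure TimeH (γ : ℕ → ℝ) (m : ℕ → ℕ) (σ : ℝ) : Prop where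
  mono : Monotone γ
  lim : Tendsto γ atTop atTop
  σpos : 0 < σ
  step : ∀ᶠ n in atTop, n < m n ∧ γ n + σ ≤ γ (m n) ∧ γ (m n) ≤ γ n + 1

variable {E : Type*} [NormedAddCommGroup E]

structure WinH (c C B ρ : ℝ) (γ F G : ℕ → ℝ) (m : ℕ → ℕ) (θ : ℕ → E) (n : ℕ) : Prop where
  desc : F (m n) ≤ F n - c * G n ^ 2 + C * (B * γ n ^ (-ρ)) ^ 2
  var : ∀ k, n ≤ k → k ≤ m n → |F k - F n| ≤ C * (G n ^ 2 + (B * γ n ^ (-ρ)) ^ 2)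
  move : ∀ k, n ≤ k → k ≤ m n → ‖θ k - θ n‖ ≤ C * (G n + B * γ n ^ (-ρ))

lemma moves {γ F G : ℕ → ℝ} {m : ℕ → ℕ} {θ : ℕ → E} {σ c C ρ : ℝ}
    (hT : TimeH γ m σ) (hc : 0 < c) (hC : 0 < C) (hρ : 1 < ρ) :
    ∃ K > 0, ∀ ℓ b : ℝ, 0 < b → (∀ᶠ n in atTop, WinH c C b ρ γ F G m θ n) →
      (∀ᶠ n in atTop, |F n - ℓ| ≤ b ^ 2 * γ n ^ (1 - 2 * ρ)) →
      ∀ᶠ n in atTop, ∀ k ≥ n, ‖θ k - θ n‖ ≤ K * b * γ n ^ (1 - ρ) := by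
  set κ := 4 / 3 / ((ρ - 1) * σ) with hκ
  have hρ1 : 0 < ρ - 1 := by linarith
  have hσ := hT.σpos
  have hκ0 : 0 < κ := by positivity
  set Q := C * (2 + C / c + ρ / c) with hQ
  have hQ0 : 0 < Q := by positivity
  refine ⟨2 * (C / c + Q * κ), by positivity, fun ℓ b hb hW hu => ?_⟩
  obtain ⟨N, hN⟩ := eventually_atTop.1 (hW.and (hu.and (hT.step.and (hT.lim.eventually_ge_atTop (4 * ρ)))))
  set Φ : ℕ → ℝ := fun n => C / (c * b) * (γ n ^ ρ * (F n - ℓ)) + Q * κ * b * γ n ^ (1 - ρ) with hΦ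
  have hγ0 : ∀ n ≥ N, 0 < γ n := fun n hn => by have := (hN n hn).2.2.2; linarith
  have hmN : ∀ n ≥ N, n < m n := fun n hn => (hN n hn).2.2.1.1
  have hΦb : ∀ n ≥ N, |Φ n| ≤ (C / c + Q * κ) * b * γ n ^ (1 - ρ) := by
    intro n hn
    have h1 := (hN n hn).2.1
    have hg := hγ0 n hn
    have h2 : γ n ^ ρ * |F n - ℓ| ≤ b ^ 2 * γ n ^ (1 - ρ) := by
      calc γ n ^ ρ * |F n - ℓ| ≤ γ n ^ ρ * (b ^ 2 * γ n ^ (1 - 2 * ρ)) := by gcongr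
        _ = b ^ 2 * (γ n ^ ρ * γ n ^ (1 - 2 * ρ)) := by ring
        _ = _ := by rw [← Real.rpow_add hg]; congr 2; ring
    have hp : 0 < γ n ^ (1 - ρ) := Real.rpow_pos_of_pos hg _
    have hp2 : 0 < γ n ^ ρ := Real.rpow_pos_of_pos hg _
    calc |Φ n| ≤ |C / (c * b) * (γ n ^ ρ * (F n - ℓ))| + |Q * κ * b * γ n ^ (1 - ρ)| := abs_add_le _ _
      _ = C / (c * b) * (γ n ^ ρ * |F n - ℓ|) + Q * κ * b * γ n ^ (1 - ρ) := by
          rw [abs_mul, abs_mul, abs_of_pos (by positivity : 0 < C / (c * b)), abs_of_pos hp2,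
            abs_of_pos (by positivity : 0 < Q * κ * b * γ n ^ (1 - ρ))]
      _ ≤ C / (c * b) * (b ^ 2 * γ n ^ (1 - ρ)) + Q * κ * b * γ n ^ (1 - ρ) := by gcongr
      _ = _ := by field_simp
  have hstep : ∀ n ≥ N, ∀ k, n ≤ k → k ≤ m n → ‖θ k - θ n‖ ≤ Φ n - Φ (m n) := by
    intro n hn k hk1 hk2
    obtain ⟨hw, hun, ⟨hm1, hm2, hm3⟩, hg4⟩ := hN n hn
    have hg := hγ0 n hn
    have hmn : N ≤ m n := by omega
    have hum := (hN _ hmn).2.1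
    have hgm := hγ0 _ hmn
    have htel := telescope hg hρ hg4 hσ hm2 hm3
    rw [← hκ] at htel
    set e := b * γ n ^ (-ρ) with he
    have hp : 0 < γ n ^ (-ρ) := Real.rpow_pos_of_pos hg _
    have he0 : 0 < e := by positivity
    have hmove := hw.move k hk1 hk2
    have hdesc := hw.desc
    rw [← he] at hmove hdesc
    have hinv : 1 / e = γ n ^ ρ / b := by
      rw [he, Real.rpow_neg hg.le]; field_simp
    have hG : G n ≤ e + G n ^ 2 * (1 / e) := by
      have : 0 ≤ e + G n ^ 2 * (1 / e) - G n := by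
        have : e + G n ^ 2 * (1 / e) - G n = ((e - G n / 2) ^ 2 + 3 / 4 * G n ^ 2) / e := by
          field_simp; ring
        rw [this]; positivity
      linarith
    have hG2 : G n ^ 2 * (1 / e) ≤ 1 / c * ((F n - F (m n)) * (1 / e) + C * e) := by
      have : G n ^ 2 ≤ 1 / c * (F n - F (m n) + C * e ^ 2) := by
        rw [one_div, le_inv_mul_iff₀ hc]; linarith
      calc G n ^ 2 * (1 / e) ≤ 1 / c * (F n - F (m n) + C * e ^ 2) * (1 / e) := by gcongr
        _ = _ := by field_simp
    have hlast : (F n - F (m n)) * (1 / e) ≤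
        1 / b * (γ n ^ ρ * (F n - ℓ) - γ (m n) ^ ρ * (F (m n) - ℓ)) + ρ * e := by
      have h1 := tangent_pos hg hgm hρ.le
      have h2 : (γ (m n) ^ ρ - γ n ^ ρ) * (F (m n) - ℓ) ≤ ρ * b ^ 2 * γ n ^ (-ρ) := by
        have hnn : 0 ≤ γ (m n) ^ ρ - γ n ^ ρ := by
          have : γ n ^ ρ ≤ γ (m n) ^ ρ := Real.rpow_le_rpow hg.le (by linarith) (by linarith)
          linarith
        have hpm : 0 < γ (m n) ^ (ρ - 1) := Real.rpow_pos_of_pos hgm _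
        have h3 : γ (m n) ^ ρ - γ n ^ ρ ≤ ρ * γ (m n) ^ (ρ - 1) := by
          have : ρ * (γ (m n) - γ n) * γ (m n) ^ (ρ - 1) ≤ ρ * 1 * γ (m n) ^ (ρ - 1) := by
            gcongr; linarith
          linarith
        calc (γ (m n) ^ ρ - γ n ^ ρ) * (F (m n) - ℓ) ≤ (γ (m n) ^ ρ - γ n ^ ρ) * |F (m n) - ℓ| := by
              gcongr; exact le_abs_self _
          _ ≤ (ρ * γ (m n) ^ (ρ - 1)) * (b ^ 2 * γ (m n) ^ (1 - 2 * ρ)) := by gcongr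
          _ = ρ * b ^ 2 * (γ (m n) ^ (ρ - 1) * γ (m n) ^ (1 - 2 * ρ)) := by ring
          _ = ρ * b ^ 2 * γ (m n) ^ (-ρ) := by rw [← Real.rpow_add hgm]; congr 2; ring
          _ ≤ ρ * b ^ 2 * γ n ^ (-ρ) := by
              have := Real.rpow_le_rpow_of_nonpos hg (by linarith : γ n ≤ γ (m n)) (by linarith : -ρ ≤ 0)
              gcongr
      rw [hinv, he]
      have : (F n - F (m n)) * (γ n ^ ρ / b) = 1 / b * (γ n ^ ρ * (F n - ℓ) - γ (m n) ^ ρ * (F (m n) - ℓ))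
          + 1 / b * ((γ (m n) ^ ρ - γ n ^ ρ) * (F (m n) - ℓ)) := by ring
      rw [this]
      have h4 : 1 / b * ((γ (m n) ^ ρ - γ n ^ ρ) * (F (m n) - ℓ)) ≤ 1 / b * (ρ * b ^ 2 * γ n ^ (-ρ)) := by gcongr
      have h5 : 1 / b * (ρ * b ^ 2 * γ n ^ (-ρ)) = ρ * (b * γ n ^ (-ρ)) := by field_simp
      linarith
    set Δ := γ n ^ ρ * (F n - ℓ) - γ (m n) ^ ρ * (F (m n) - ℓ) with hΔ
    have h10 : C * (G n + e) ≤ C / (c * b) * Δ + Q * e := by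
      have : G n + e ≤ 2 * e + 1 / c * ((1 / b * Δ + ρ * e) + C * e) := by
        have : 1 / c * ((F n - F (m n)) * (1 / e) + C * e) ≤ 1 / c * ((1 / b * Δ + ρ * e) + C * e) := by gcongr
        linarith
      calc C * (G n + e) ≤ C * (2 * e + 1 / c * ((1 / b * Δ + ρ * e) + C * e)) := by gcongr
        _ = _ := by rw [hQ]; field_simp; ring
    have h11 : Q * e ≤ Q * (b * (κ * (γ n ^ (1 - ρ) - γ (m n) ^ (1 - ρ)))) := by
      rw [he]; gcongr
    have h12 : Φ n - Φ (m n) = C / (c * b) * Δ + Q * (b * (κ * (γ n ^ (1 - ρ) - γ (m n) ^ (1 - ρ)))) := by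
      simp only [hΦ, hΔ]; ring
    linarith
  refine eventually_atTop.2 ⟨N, fun n hn k hk => ?_⟩
  obtain ⟨n', hn', hP, h1, h2⟩ := chain_ind (m := m) (N := N) (n0 := n)
    (P := fun j => ‖θ j - θ n‖ ≤ Φ n - Φ j) hmN hn (by simp) (by
      intro j hj hP
      have := hstep j (hn.trans hj) (m j) (hmN j (hn.trans hj)).le le_rfl
      calc ‖θ (m j) - θ n‖ ≤ ‖θ (m j) - θ j‖ + ‖θ j - θ n‖ := norm_sub_le_norm_sub_add_norm_sub _ _ _
        _ ≤ _ := by linarith) k hk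
  have hn'N : N ≤ n' := hn.trans hn'
  have h3 := hstep n' hn'N k h1 h2.le
  have h4 : ‖θ k - θ n‖ ≤ Φ n - Φ (m n') :=
    calc ‖θ k - θ n‖ ≤ ‖θ k - θ n'‖ + ‖θ n' - θ n‖ := norm_sub_le_norm_sub_add_norm_sub _ _ _
      _ ≤ _ := by linarith
  have h5 := hΦb n hn
  have h6 := hΦb (m n') (by have := hmN n' hn'N; omega)
  have h7 : γ (m n') ^ (1 - ρ) ≤ γ n ^ (1 - ρ) :=
    Real.rpow_le_rpow_of_nonpos (hγ0 n hn) (hT.mono (by have := hmN n' hn'N; omega)) (by linarith)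
  have h8 : (C / c + Q * κ) * b * γ (m n') ^ (1 - ρ) ≤ (C / c + Q * κ) * b * γ n ^ (1 - ρ) := by gcongr
  have := abs_le.1 h5
  have := abs_le.1 h6
  linarith

end SGR
namespace SGR
variable {E : Type*} [NormedAddCommGroup E]

lemma dom {c C B ρ μ M κ A g u um G : ℝ} (hc : 0 < c) (hC : 0 < C) (hB : 0 ≤ B) (hκ : 0 < κ)
    (hμ : 0 < μ) (hM : 0 < M) (hκC : 2 * C ≤ c * κ ^ 2) (hg : 0 < g) (hG : 0 ≤ G)
    (hdesc : um ≤ u - c * G ^ 2 + C * (B * g ^ (-ρ)) ^ 2) (hL : |u| ≤ M * G ^ μ)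
    (hA : M * (κ * B) ^ μ ≤ A) (hu : A * g ^ (-(μ * ρ)) ≤ |u|) :
    um ≤ u - c / 2 * G ^ 2 ∧ (|u| / M) ^ (2 / μ) ≤ G ^ 2 := by
  have hp : 0 < g ^ (-ρ) := Real.rpow_pos_of_pos hg _
  constructor
  · have h1 : (κ * (B * g ^ (-ρ))) ^ μ ≤ G ^ μ := by
      have h2 : (κ * (B * g ^ (-ρ))) ^ μ = (κ * B) ^ μ * g ^ (-(μ * ρ)) := by
        rw [← mul_assoc, Real.mul_rpow (by positivity) hp.le, ← Real.rpow_mul hg.le]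
        congr 2; ring
      have h3 : M * ((κ * B) ^ μ * g ^ (-(μ * ρ))) ≤ M * G ^ μ := by
        have : 0 < g ^ (-(μ * ρ)) := Real.rpow_pos_of_pos hg _
        calc M * ((κ * B) ^ μ * g ^ (-(μ * ρ))) = M * (κ * B) ^ μ * g ^ (-(μ * ρ)) := by ring
          _ ≤ A * g ^ (-(μ * ρ)) := by gcongr
          _ ≤ _ := hu.trans hL
      rw [h2]; exact le_of_mul_le_mul_left h3 hM
    have h4 : κ * (B * g ^ (-ρ)) ≤ G := (Real.rpow_le_rpow_iff (by positivity) hG hμ).1 h1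
    have h5 : (κ * (B * g ^ (-ρ))) ^ 2 ≤ G ^ 2 := by gcongr
    have h6 : 2 * C * (B * g ^ (-ρ)) ^ 2 ≤ c * κ ^ 2 * (B * g ^ (-ρ)) ^ 2 := by gcongr
    have h7 : c * (κ * (B * g ^ (-ρ))) ^ 2 ≤ c * G ^ 2 := by gcongr
    nlinarith
  · have h1 : |u| / M ≤ G ^ μ := by rw [div_le_iff₀ hM]; linarith
    calc (|u| / M) ^ (2 / μ) ≤ (G ^ μ) ^ (2 / μ) := by gcongr
      _ = G ^ (2 : ℝ) := by rw [← Real.rpow_mul hG]; congr 1; field_simp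
      _ = G ^ 2 := by norm_num

variable {γ F G : ℕ → ℝ} {m : ℕ → ℕ} {θ : ℕ → E} {σ c C ρ μ M κ : ℝ}

lemma lower {ℓ A B : ℝ} (hT : TimeH γ m σ) (hc : 0 < c) (hC : 0 < C) (hB : 0 ≤ B) (hκ : 0 < κ)
    (hκC : 2 * C ≤ c * κ ^ 2) (hμ : 0 < μ) (hρ : 0 < ρ) (hM : 0 < M) (hG : ∀ n, 0 ≤ G n)
    (hA0 : 0 < A) (hA : M * (κ * B) ^ μ ≤ A)
    (hW : ∀ᶠ n in atTop, WinH c C B ρ γ F G m θ n)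
    (hL : ∀ᶠ n in atTop, |F n - ℓ| ≤ M * G n ^ μ) (hF : Tendsto F atTop (nhds ℓ)) :
    ∀ᶠ n in atTop, -(A * γ n ^ (-(μ * ρ))) ≤ F n - ℓ := by
  obtain ⟨N, hN⟩ := eventually_atTop.1 (hW.and (hL.and (hT.step.and (hT.lim.eventually_gt_atTop 0))))
  refine eventually_atTop.2 ⟨N, fun n hn => ?_⟩
  by_contra hcon
  push Not at hcon
  have hg0 := (hN n hn).2.2.2
  have hpos : 0 < A * γ n ^ (-(μ * ρ)) := mul_pos hA0 (Real.rpow_pos_of_pos hg0 _)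
  have hfreq := chain_freq (m := m) (N := N) (n0 := n)
    (P := fun j => F j - ℓ < -(A * γ n ^ (-(μ * ρ)))) (fun j hj => (hN j hj).2.2.1.1) hn hcon (by
      intro j hj hP
      obtain ⟨hw, hl, hs, hgj⟩ := hN j (hn.trans hj)
      have hd : F (m j) - ℓ ≤ (F j - ℓ) - c * G j ^ 2 + C * (B * γ j ^ (-ρ)) ^ 2 := by
        have := hw.desc; linarith
      have hpw : γ j ^ (-(μ * ρ)) ≤ γ n ^ (-(μ * ρ)) :=
        Real.rpow_le_rpow_of_nonpos hg0 (hT.mono hj) (by have := mul_pos hμ hρ; linarith)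
      have hu : A * γ j ^ (-(μ * ρ)) ≤ |F j - ℓ| := by
        have h1 : A * γ j ^ (-(μ * ρ)) ≤ A * γ n ^ (-(μ * ρ)) := by gcongr
        have := neg_le_abs (F j - ℓ)
        linarith
      have := (dom hc hC hB hκ hμ hM hκC hgj (hG j) hd hl hA hu).1
      have h2 : 0 ≤ c / 2 * G j ^ 2 := by positivity
      show F (m j) - ℓ < _
      linarith)
  have hF' : Tendsto (fun n => F n - ℓ) atTop (nhds 0) := by simpa using hF.sub_const ℓ
  have := hF'.eventually (lt_mem_nhds (show -(A * γ n ^ (-(μ * ρ))) < 0 by linarith))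
  obtain ⟨j, h1, h2⟩ := (hfreq.and_eventually this).exists
  linarith

/-- one-step invariance -/
lemma inv_step {c C B ρ μ M κ A g gm u um G : ℝ} (hc : 0 < c) (hC : 0 < C) (hB : 0 ≤ B)
    (hκ : 0 < κ) (hμ : 0 < μ) (hμ2 : μ ≤ 2) (hρ : 0 < ρ) (hM : 0 < M)
    (hκC : 2 * C ≤ c * κ ^ 2) (hg : 1 ≤ g) (hg4 : 4 * (μ * ρ) ≤ g) (hG : 0 ≤ G)
    (hgm : g ≤ gm) (hgm1 : gm ≤ g + 1)
    (hdesc : um ≤ u - c * G ^ 2 + C * (B * g ^ (-ρ)) ^ 2) (hL : |u| ≤ M * G ^ μ)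
    (hA0 : 0 < A) (hA : M * (κ * B) ^ μ ≤ A / 2) (hA2 : C * B ^ 2 ≤ A / 4)
    (hE : A * (μ * ρ) * g ^ (-(μ * ρ) - 1) ≤ c / 2 * (A / (2 * M)) ^ (2 / μ) * g ^ (-(2 * ρ)))
    (hu : u ≤ A * g ^ (-(μ * ρ))) : um ≤ A * gm ^ (-(μ * ρ)) := by
  have hg0 : 0 < g := by linarith
  have hp : 0 < g ^ (-(μ * ρ)) := Real.rpow_pos_of_pos hg0 _
  have hμρ : 0 < μ * ρ := by positivity
  by_cases h : u ≤ A / 2 * g ^ (-(μ * ρ))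
  · have h1 := pow_compare hg0 hg4 hgm hgm1 hμρ.le
    have h2 : (g ^ (-ρ)) ^ 2 ≤ g ^ (-(μ * ρ)) := by
      rw [← Real.rpow_natCast, ← Real.rpow_mul hg0.le]
      apply Real.rpow_le_rpow_of_exponent_le hg
      push_cast; nlinarith
    have h3 : C * (B * g ^ (-ρ)) ^ 2 ≤ A / 4 * g ^ (-(μ * ρ)) := by
      calc C * (B * g ^ (-ρ)) ^ 2 = C * B ^ 2 * (g ^ (-ρ)) ^ 2 := by ring
        _ ≤ _ := by gcongr
    have h4 : 0 ≤ c * G ^ 2 := by positivity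
    nlinarith
  · push Not at h
    have hu0 : 0 < u := lt_trans (by positivity) h
    have habs : |u| = u := abs_of_pos hu0
    obtain ⟨h1, h2⟩ := dom hc hC hB hκ hμ hM hκC hg0 hG hdesc hL hA (by rw [habs]; exact h.le)
    rw [habs] at h2
    have h3 : (A / (2 * M)) ^ (2 / μ) * g ^ (-(2 * ρ)) ≤ (u / M) ^ (2 / μ) := by
      have : g ^ (-(2 * ρ)) = (g ^ (-(μ * ρ))) ^ (2 / μ) := by
        rw [← Real.rpow_mul hg0.le]; congr 1; field_simp
      rw [this, ← Real.mul_rpow (by positivity) hp.le]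
      apply Real.rpow_le_rpow (by positivity) _ (by positivity)
      rw [le_div_iff₀ hM]
      calc A / (2 * M) * g ^ (-(μ * ρ)) * M = A / 2 * g ^ (-(μ * ρ)) := by field_simp
        _ ≤ u := h.le
    have h4 : c / 2 * ((A / (2 * M)) ^ (2 / μ) * g ^ (-(2 * ρ))) ≤ c / 2 * G ^ 2 := by
      have := h3.trans h2
      gcongr
    have h5 := tangent_neg hg0 (hg0.trans_le hgm) hμρ.le
    have h6 : A * (g ^ (-(μ * ρ)) - μ * ρ * (gm - g) * g ^ (-(μ * ρ) - 1)) ≤ A * gm ^ (-(μ * ρ)) := by gcongr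
    have h7 : A * (μ * ρ) * g ^ (-(μ * ρ) - 1) * (gm - g) ≤ A * (μ * ρ) * g ^ (-(μ * ρ) - 1) * 1 := by
      have : 0 < g ^ (-(μ * ρ) - 1) := Real.rpow_pos_of_pos hg0 _
      gcongr; linarith
    nlinarith

/-- eventual domination of powers -/
lemma pow_small (hlim : Tendsto γ atTop atTop) {a b x y : ℝ} (hab : a < b) (hy : 0 < y) :
    ∀ᶠ n in atTop, x * γ n ^ (-b) ≤ y * γ n ^ (-a) := by
  have h1 : Tendsto (fun n => γ n ^ (-(b - a))) atTop (nhds 0) :=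
    (tendsto_rpow_neg_atTop (by linarith : 0 < b - a)).comp hlim
  have h2 : Tendsto (fun n => x * γ n ^ (-(b - a))) atTop (nhds 0) := by simpa using h1.const_mul x
  filter_upwards [h2.eventually (gt_mem_nhds hy), hlim.eventually_gt_atTop 0] with n h3 h4
  have h5 : γ n ^ (-b) = γ n ^ (-(b - a)) * γ n ^ (-a) := by
    rw [← Real.rpow_add h4]; congr 1; ring
  rw [h5, ← mul_assoc]
  have : 0 < γ n ^ (-a) := Real.rpow_pos_of_pos h4 _
  gcongr

lemma hE_big (hlim : Tendsto γ atTop atTop) (hc : 0 < c) (hμ : 1 < μ) (hμ2 : μ ≤ 2) (hρ : 0 < ρ)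
    (hM : 0 < M) (hρμ : ρ * (2 - μ) ≤ 1) :
    ∃ A1, ∀ᶠ n in atTop, ∀ A ≥ A1,
      A * (μ * ρ) * γ n ^ (-(μ * ρ) - 1) ≤ c / 2 * (A / (2 * M)) ^ (2 / μ) * γ n ^ (-(2 * ρ)) := by
  rcases hμ2.lt_or_eq with h | h
  · have h0 : 0 < 2 / μ - 1 := by
      have : 1 < 2 / μ := by rw [lt_div_iff₀ (by linarith)]; linarith
      linarith
    have h1 : Tendsto (fun A : ℝ => A ^ (2 / μ - 1)) atTop atTop := tendsto_rpow_atTop h0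
    obtain ⟨A1, hA1⟩ := eventually_atTop.1 ((h1.eventually_ge_atTop ((μ * ρ) / (c / 2 * (1 / (2 * M)) ^ (2 / μ)))).and
      (eventually_gt_atTop (0:ℝ)))
    refine ⟨A1, ?_⟩
    filter_upwards [hlim.eventually_ge_atTop 1] with n hn A hA
    obtain ⟨h2, h3⟩ := hA1 A hA
    have hg0 : 0 < γ n := by linarith
    have h4 : γ n ^ (-(μ * ρ) - 1) ≤ γ n ^ (-(2 * ρ)) :=
      Real.rpow_le_rpow_of_exponent_le hn (by nlinarith)
    have h5 : A * (μ * ρ) ≤ c / 2 * (A / (2 * M)) ^ (2 / μ) := by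
      rw [div_le_iff₀ (by positivity)] at h2
      have h6 : (A / (2 * M)) ^ (2 / μ) = A * A ^ (2 / μ - 1) * (1 / (2 * M)) ^ (2 / μ) := by
        rw [show A / (2 * M) = A * (1 / (2 * M)) by ring, Real.mul_rpow h3.le (by positivity)]
        congr 1
        rw [Real.rpow_sub h3, Real.rpow_one]; field_simp
      rw [h6]
      calc A * (μ * ρ) ≤ A * (A ^ (2 / μ - 1) * (c / 2 * (1 / (2 * M)) ^ (2 / μ))) := by gcongr
        _ = _ := by ring
    have : 0 < γ n ^ (-(μ * ρ) - 1) := Real.rpow_pos_of_pos hg0 _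
    have : 0 < γ n ^ (-(2 * ρ)) := Real.rpow_pos_of_pos hg0 _
    calc _ ≤ A * (μ * ρ) * γ n ^ (-(2 * ρ)) := by gcongr
      _ ≤ _ := by gcongr
  · subst h
    refine ⟨1, ?_⟩
    filter_upwards [pow_small hlim (a := 2 * ρ) (b := 2 * ρ + 1) (x := 2 * ρ) (y := c / 2 * (1 / (2 * M)))
      (by linarith) (by positivity)] with n hn A hA
    rw [show (2:ℝ) / 2 = 1 by norm_num, Real.rpow_one, show -(2 * ρ) - 1 = -(2 * ρ + 1) by ring]
    have : A * (2 * ρ * γ n ^ (-(2 * ρ + 1))) ≤ A * (c / 2 * (1 / (2 * M)) * γ n ^ (-(2 * ρ))) := by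
      gcongr
    calc _ = A * (2 * ρ * γ n ^ (-(2 * ρ + 1))) := by ring
      _ ≤ _ := this
      _ = _ := by ring

/-- the invariant barrier -/
def Barrier (γ F : ℕ → ℝ) (m : ℕ → ℕ) (ℓ A a : ℝ) (N n0 : ℕ) : Prop :=
  (∀ n ≥ N, n < m n) ∧ N ≤ n0 ∧ F n0 - ℓ ≤ A * γ n0 ^ (-a) ∧
    ∀ n ≥ N, F n - ℓ ≤ A * γ n ^ (-a) → F (m n) - ℓ ≤ A * γ (m n) ^ (-a)

lemma upper_big {ℓ B Alow : ℝ} (hT : TimeH γ m σ) (hc : 0 < c) (hC : 0 < C) (hB : 0 ≤ B) (hκ : 0 < κ)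
    (hκC : 2 * C ≤ c * κ ^ 2) (hμ : 1 < μ) (hμ2 : μ ≤ 2) (hρ : 0 < ρ) (hM : 0 < M)
    (hG : ∀ n, 0 ≤ G n) (hρμ : ρ * (2 - μ) ≤ 1)
    (hW : ∀ᶠ n in atTop, F (m n) ≤ F n - c * G n ^ 2 + C * (B * γ n ^ (-ρ)) ^ 2)
    (hL : ∀ᶠ n in atTop, |F n - ℓ| ≤ M * G n ^ μ) (N0 : ℕ) :
    ∃ A N n0, Alow ≤ A ∧ N0 ≤ N ∧ Barrier γ F m ℓ A (μ * ρ) N n0 := by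
  obtain ⟨A1, hE⟩ := hE_big (c := c) hT.lim hc hμ hμ2 hρ hM hρμ
  obtain ⟨N, hN⟩ := eventually_atTop.1 (hW.and (hL.and (hT.step.and
    ((hT.lim.eventually_ge_atTop 1).and ((hT.lim.eventually_ge_atTop (4 * (μ * ρ))).and
      (hE.and (eventually_ge_atTop N0)))))))
  set A := max (max Alow A1) (max (max 1 (2 * (M * (κ * B) ^ μ))) (max (4 * (C * B ^ 2))
    ((F N - ℓ) / γ N ^ (-(μ * ρ))))) with hA
  have a1 : Alow ≤ A := by simp [hA]
  have a2 : A1 ≤ A := by simp [hA]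
  have a3 : 1 ≤ A := by simp [hA]
  have a4 : 2 * (M * (κ * B) ^ μ) ≤ A := by simp [hA]
  have a5 : 4 * (C * B ^ 2) ≤ A := by simp [hA]
  have a6 : (F N - ℓ) / γ N ^ (-(μ * ρ)) ≤ A := by simp [hA]
  clear_value A
  refine ⟨A, N, N, a1, (hN N le_rfl).2.2.2.2.2.2, fun n hn => (hN n hn).2.2.1.1, le_rfl, ?_, ?_⟩
  · have : 0 < γ N := by have := (hN N le_rfl).2.2.2.1; linarith
    rwa [div_le_iff₀ (Real.rpow_pos_of_pos this _)] at a6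
  · intro n hn hu
    obtain ⟨hw, hl, ⟨s1, s2, s3⟩, g1, g4, he, -⟩ := hN n hn
    have := hT.σpos
    exact inv_step (u := F n - ℓ) (um := F (m n) - ℓ) (G := G n) hc hC hB hκ (by linarith) hμ2 hρ hM hκC g1 g4 (hG n)
      (by linarith) s3 (by linarith) hl (by linarith) (by linarith) (by linarith) (he A a2) hu

lemma upper_small {ℓ A B : ℝ} (hT : TimeH γ m σ) (hc : 0 < c) (hC : 0 < C) (hB : 0 ≤ B) (hκ : 0 < κ)
    (hκC : 2 * C ≤ c * κ ^ 2) (hμ : 1 < μ) (hμ2 : μ ≤ 2) (hρ : 0 < ρ) (hM : 0 < M)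
    (hG : ∀ n, 0 ≤ G n) (hρμ : ρ * (2 - μ) < 1)
    (hA0 : 0 < A) (hA : M * (κ * B) ^ μ ≤ A / 2) (hA2 : C * B ^ 2 ≤ A / 4)
    (hW : ∀ᶠ n in atTop, F (m n) ≤ F n - c * G n ^ 2 + C * (B * γ n ^ (-ρ)) ^ 2)
    (hL : ∀ᶠ n in atTop, |F n - ℓ| ≤ M * G n ^ μ) :
    ∃ N n0, Barrier γ F m ℓ A (μ * ρ) N n0 := by
  have hE := pow_small hT.lim (a := 2 * ρ) (b := μ * ρ + 1) (x := A * (μ * ρ))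
    (y := c / 2 * (A / (2 * M)) ^ (2 / μ)) (by nlinarith) (by positivity)
  obtain ⟨N, hN⟩ := eventually_atTop.1 (hW.and (hL.and (hT.step.and
    ((hT.lim.eventually_ge_atTop 1).and ((hT.lim.eventually_ge_atTop (4 * (μ * ρ))).and hE)))))
  by_cases hent : ∃ n0 ≥ N, F n0 - ℓ ≤ A * γ n0 ^ (-(μ * ρ))
  · obtain ⟨n0, h0, h1⟩ := hent
    refine ⟨N, n0, fun n hn => (hN n hn).2.2.1.1, h0, h1, ?_⟩
    intro n hn hu
    obtain ⟨hw, hl, ⟨s1, s2, s3⟩, g1, g4, he⟩ := hN n hn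
    have := hT.σpos
    exact inv_step (u := F n - ℓ) (um := F (m n) - ℓ) (G := G n) hc hC hB hκ (by linarith) hμ2 hρ hM hκC g1 g4 (hG n)
      (by linarith) s3 (by linarith) hl (by linarith) (by linarith) (by linarith)
      (by rw [show -(μ * ρ) - 1 = -(μ * ρ + 1) by ring]; exact he) hu
  · exfalso
    push Not at hent
    set r2 := ρ + (1 - ρ * (2 - μ)) / 2 with hr2
    have hr2ρ : ρ < r2 := by linarith
    have hr2μ : r2 * (2 - μ) ≤ 1 := by nlinarith
    have hW' : ∀ᶠ n in atTop, F (m n) ≤ F n - (c / 2) * G n ^ 2 + C * (0 * γ n ^ (-r2)) ^ 2 := by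
      refine eventually_atTop.2 ⟨N, fun n hn => ?_⟩
      obtain ⟨hw, hl, ⟨s1, s2, s3⟩, g1, g4, he⟩ := hN n hn
      have h1 := hent n hn
      have := (dom (u := F n - ℓ) (um := F (m n) - ℓ) (G := G n) (g := γ n) (A := A) (ρ := ρ) hc hC hB hκ
        (by linarith) hM hκC (by linarith) (hG n)
        (by linarith) hl (by linarith) (h1.le.trans (le_abs_self _))).1
      simp; linarith
    obtain ⟨A', N', n0, -, hNN, -, hn0, hb0, hb⟩ := upper_big (Alow := 0) (κ := 2 * κ) (ρ := r2) hT (by positivity : 0 < c / 2) hC le_rfl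
      (by positivity : 0 < 2 * κ) (by nlinarith) hμ hμ2 (by linarith) hM hG hr2μ hW' hL N
    have hfr := chain_freq (m := m) (N := N) (n0 := n0) (P := fun n => F n - ℓ ≤ A' * γ n ^ (-(μ * r2)))
      (fun j hj => (hN j hj).2.2.1.1) (hNN.trans hn0) hb0 (fun n hn => hb n (hn0.trans hn))
    have hsm := pow_small hT.lim (a := μ * ρ) (b := μ * r2) (x := A') (y := A) (by gcongr) hA0
    obtain ⟨j, h1, h2, h3⟩ := (hfr.and_eventually (hsm.and (eventually_ge_atTop N))).exists
    have := hent j h3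
    linarith

lemma rate {ℓ A B : ℝ} {N n0 : ℕ} (hT : TimeH γ m σ) (hc : 0 < c) (hC : 0 < C) (hB : 0 ≤ B)
    (hμ : 0 < μ) (hμ2 : μ ≤ 2) (hρ : 0 < ρ) (hA0 : 0 < A) (hA2 : C * B ^ 2 ≤ A)
    (hW : ∀ᶠ n in atTop, WinH c C B ρ γ F G m θ n)
    (hlow : ∀ᶠ n in atTop, -(A * γ n ^ (-(μ * ρ))) ≤ F n - ℓ)
    (hbar : Barrier γ F m ℓ A (μ * ρ) N n0) :
    ∀ᶠ n in atTop, |F n - ℓ| ≤ 2 * (2 + 3 * C / c) * A * γ n ^ (-(μ * ρ)) ∧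
      G n ^ 2 ≤ (4 * (2 + 3 * C / c) + 1) / c * A * γ n ^ (-(μ * ρ)) := by
  have hμρ : 0 < μ * ρ := by positivity
  obtain ⟨N1, hN⟩ := eventually_atTop.1 (hW.and (hlow.and (hT.step.and
    ((hT.lim.eventually_ge_atTop 1).and (hT.lim.eventually_ge_atTop (4 * (μ * ρ)))))))
  have hη : ∀ n ≥ N1, C * (B * γ n ^ (-ρ)) ^ 2 ≤ A * γ n ^ (-(μ * ρ)) := by
    intro n hn
    have hg := (hN n hn).2.2.2.1
    have hg0 : 0 < γ n := by linarith
    have h2 : (γ n ^ (-ρ)) ^ 2 ≤ γ n ^ (-(μ * ρ)) := by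
      rw [← Real.rpow_natCast, ← Real.rpow_mul hg0.le]
      apply Real.rpow_le_rpow_of_exponent_le hg
      push_cast; nlinarith
    calc C * (B * γ n ^ (-ρ)) ^ 2 = C * B ^ 2 * (γ n ^ (-ρ)) ^ 2 := by ring
      _ ≤ _ := by gcongr
  have hmo : ∀ n ≥ N1, ∀ k ≥ n, γ k ^ (-(μ * ρ)) ≤ γ n ^ (-(μ * ρ)) := by
    intro n hn k hk
    have hg := (hN n hn).2.2.2.1
    exact Real.rpow_le_rpow_of_nonpos (by linarith) (hT.mono hk) (by linarith)
  obtain ⟨hmN, hN0, hb0, hb⟩ := hbar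
  have hfr := chain_freq (m := m) (N := N) (n0 := n0) (P := fun n => F n - ℓ ≤ A * γ n ^ (-(μ * ρ)))
      hmN hN0 hb0 (fun n hn => hb n (hN0.trans hn))
  obtain ⟨n1, hn1, hn1'⟩ := (hfr.and_eventually (eventually_ge_atTop (max N N1))).exists
  have hNn1 : N ≤ n1 := (le_max_left _ _).trans hn1'
  have hN1n1 : N1 ≤ n1 := (le_max_right _ _).trans hn1'
  have hu : ∀ᶠ k in atTop, |F k - ℓ| ≤ 2 * (2 + 3 * C / c) * A * γ k ^ (-(μ * ρ)) := by
    refine eventually_atTop.2 ⟨n1, fun k hk => ?_⟩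
    obtain ⟨n, hn, hPn, h1, h2⟩ := chain_ind hmN hNn1 hn1 (fun n hn => hb n (hNn1.trans hn)) k hk
    have hnN : N ≤ n := hNn1.trans hn
    have hnN1 : N1 ≤ n := hN1n1.trans hn
    obtain ⟨hw, hl, ⟨s1, s2, s3⟩, g1, g4⟩ := hN n hnN1
    have hσ := hT.σpos
    have e1 := hw.desc
    have e2 := hη n hnN1
    have e3 := (hN (m n) (by omega)).2.1
    have e4 := hmo n hnN1 (m n) s1.le
    have e5 := hmo k (hN1n1.trans hk) (m n) h2.le
    have e6 := pow_compare (by linarith) g4 (by linarith) s3 hμρ.le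
    have e7 := hw.var k h1 h2.le
    have e8 : A * γ (m n) ^ (-(μ * ρ)) ≤ A * γ n ^ (-(μ * ρ)) := by gcongr
    have e9 : G n ^ 2 ≤ 3 / c * (A * γ n ^ (-(μ * ρ))) := by
      rw [div_mul_eq_mul_div, le_div_iff₀ hc]; linarith
    have e10 : C * G n ^ 2 ≤ C * (3 / c * (A * γ n ^ (-(μ * ρ)))) := by gcongr
    have e11 : C * (3 / c * (A * γ n ^ (-(μ * ρ)))) = 3 * C / c * (A * γ n ^ (-(μ * ρ))) := by ring
    have e12 : F k - ℓ ≤ (2 + 3 * C / c) * (A * γ n ^ (-(μ * ρ))) := by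
      have := (abs_le.1 e7).2
      nlinarith
    have hpk : 0 < γ k ^ (-(μ * ρ)) := Real.rpow_pos_of_pos (by have := hT.mono h1; linarith) _
    have e13 : γ n ^ (-(μ * ρ)) ≤ 2 * γ k ^ (-(μ * ρ)) := by
      have : 0 < γ n ^ (-(μ * ρ)) := Real.rpow_pos_of_pos (by linarith) _
      linarith
    have hR : 0 < 3 * C / c := by positivity
    have e14 : (2 + 3 * C / c) * (A * γ n ^ (-(μ * ρ))) ≤ (2 + 3 * C / c) * (A * (2 * γ k ^ (-(μ * ρ)))) := by gcongr
    have e15 := (hN k (hN1n1.trans hk)).2.1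
    have e16 : 0 ≤ 3 * C / c * (A * γ k ^ (-(μ * ρ))) := by positivity
    have e17 : 0 ≤ A * γ k ^ (-(μ * ρ)) := by positivity
    rw [abs_le]
    constructor <;> nlinarith
  filter_upwards [hu, hT.step, eventually_ge_atTop N1, (tendsto_atTop.2 fun b => by
    filter_upwards [hT.step, eventually_ge_atTop b] with n h1 h2
    omega : Tendsto m atTop atTop).eventually hu] with n h1 h2 h3 h4
  refine ⟨h1, ?_⟩
  have h5 := (hN n h3).1.desc
  have h6 := hη n h3
  have h7 := hmo n h3 (m n) h2.1.le
  set K := 2 * (2 + 3 * C / c) with hK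
  have hK0 : 0 < K := by positivity
  have h8 : K * A * γ (m n) ^ (-(μ * ρ)) ≤ K * A * γ n ^ (-(μ * ρ)) := by gcongr
  have := (abs_le.1 h1).2
  have := (abs_le.1 h4).1
  rw [show 4 * (2 + 3 * C / c) = 2 * K by rw [hK]; ring, div_mul_eq_mul_div, div_mul_eq_mul_div, le_div_iff₀ hc]
  linarith

lemma caseI {ℓ B : ℝ} (hT : TimeH γ m σ) (hc : 0 < c) (hC : 0 < C) (hB : 0 < B)
    (hμ : 1 < μ) (hμ2 : μ ≤ 2) (hρ : 1 < ρ) (hM : 0 < M)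
    (hG : ∀ n, 0 ≤ G n) (hρμ : ρ * (2 - μ) ≤ 1)
    (hW : ∀ B' ≥ B, ∀ᶠ n in atTop, WinH c C B' ρ γ F G m θ n)
    (hL : ∀ᶠ n in atTop, |F n - ℓ| ≤ M * G n ^ μ) (hF : Tendsto F atTop (nhds ℓ)) :
    ∃ K > 0, ∀ᶠ n in atTop, |F n - ℓ| ≤ K * γ n ^ (-(μ * ρ)) ∧ G n ^ 2 ≤ K * γ n ^ (-(μ * ρ)) ∧
      ∀ k ≥ n, ‖θ k - θ n‖ ≤ K * γ n ^ (-(ρ - 1)) := by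
  set κ := Real.sqrt (2 * C / c) with hκ
  have hκ0 : 0 < κ := by positivity
  have hκC : 2 * C ≤ c * κ ^ 2 := by
    rw [hκ, Real.sq_sqrt (by positivity)]; apply le_of_eq; field_simp
  obtain ⟨A, N, n0, hA, -, hbar⟩ := upper_big (Alow := max 1 (max (M * (κ * B) ^ μ) (C * B ^ 2)))
    (ℓ := ℓ) hT hc hC hB.le hκ0 hκC hμ hμ2
    (by linarith : 0 < ρ) hM hG hρμ ((hW B le_rfl).mono fun n h => h.desc) hL 0
  have a1 : 1 ≤ A := (le_max_left _ _).trans hA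
  have a2 : M * (κ * B) ^ μ ≤ A := ((le_max_left _ _).trans (le_max_right _ _)).trans hA
  have a3 : C * B ^ 2 ≤ A := ((le_max_right _ _).trans (le_max_right _ _)).trans hA
  have hlow := lower (ℓ := ℓ) hT hc hC hB.le hκ0 hκC (by linarith : 0 < μ) (by linarith : 0 < ρ) hM hG
    (by linarith : 0 < A) a2 (hW B le_rfl) hL hF
  have hr := rate hT hc hC hB.le (by linarith) hμ2 (by linarith) (by linarith) a3 (hW B le_rfl) hlow hbar
  obtain ⟨K, hK, hmv⟩ := moves (F := F) (G := G) (θ := θ) hT hc hC hρ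
  set K1 := 2 * (2 + 3 * C / c) * A with hK1
  have hA0 : 0 < A := by linarith
  have hK10 : 0 < K1 := by positivity
  set b := max B (Real.sqrt K1) with hb
  have hb0 : 0 < b := hB.trans_le (le_max_left _ _)
  have hbK : K1 ≤ b ^ 2 := by
    calc K1 = Real.sqrt K1 ^ 2 := (Real.sq_sqrt hK10.le).symm
      _ ≤ b ^ 2 := by gcongr; exact le_max_right _ _
  have hm' := hmv ℓ b hb0 (hW b (le_max_left _ _)) (by
    filter_upwards [hr, hT.lim.eventually_ge_atTop 1] with n h1 h2
    refine h1.1.trans ?_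
    have : γ n ^ (-(μ * ρ)) ≤ γ n ^ (1 - 2 * ρ) := Real.rpow_le_rpow_of_exponent_le h2 (by nlinarith)
    have : 0 < γ n ^ (1 - 2 * ρ) := Real.rpow_pos_of_pos (by linarith) _
    gcongr)
  refine ⟨max K1 (max ((4 * (2 + 3 * C / c) + 1) / c * A) (K * b)), lt_max_of_lt_left hK10, ?_⟩
  filter_upwards [hr, hm', hT.lim.eventually_ge_atTop 1] with n h1 h2 h3
  have p1 : 0 < γ n ^ (-(μ * ρ)) := Real.rpow_pos_of_pos (by linarith) _
  have p2 : 0 < γ n ^ (-(ρ - 1)) := Real.rpow_pos_of_pos (by linarith) _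
  refine ⟨h1.1.trans ?_, h1.2.trans ?_, fun k hk => (h2 k hk).trans ?_⟩
  · gcongr; exact le_max_left _ _
  · gcongr; exact (le_max_left _ _).trans (le_max_right _ _)
  · rw [show 1 - ρ = -(ρ - 1) by ring]
    gcongr; exact (le_max_right _ _).trans (le_max_right _ _)

lemma caseII {ℓ : ℝ} (hT : TimeH γ m σ) (hc : 0 < c) (hC : 0 < C)
    (hμ : 1 < μ) (hμ2 : μ ≤ 2) (hρ : 1 < ρ) (hM : 0 < M)
    (hG : ∀ n, 0 ≤ G n) (hρμ : ρ * (2 - μ) < 1)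
    (hW : ∀ B > 0, ∀ᶠ n in atTop, WinH c C B ρ γ F G m θ n)
    (hL : ∀ᶠ n in atTop, |F n - ℓ| ≤ M * G n ^ μ) (hF : Tendsto F atTop (nhds ℓ))
    {ε : ℝ} (hε : 0 < ε) :
    ∀ᶠ n in atTop, |F n - ℓ| ≤ ε * γ n ^ (-(μ * ρ)) ∧ G n ^ 2 ≤ ε * γ n ^ (-(μ * ρ)) ∧
      ∀ k ≥ n, ‖θ k - θ n‖ ≤ ε * γ n ^ (-(ρ - 1)) := by
  set κ := Real.sqrt (2 * C / c) with hκ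
  have hκ0 : 0 < κ := by positivity
  have hκC : 2 * C ≤ c * κ ^ 2 := by
    rw [hκ, Real.sq_sqrt (by positivity)]; apply le_of_eq; field_simp
  set K1 := 2 * (2 + 3 * C / c) with hK1
  set K2 := (4 * (2 + 3 * C / c) + 1) / c with hK2
  have hK10 : 0 < K1 := by positivity
  have hK20 : 0 < K2 := by positivity
  set A := min (ε / K1) (ε / K2) with hA
  have hA0 : 0 < A := by positivity
  obtain ⟨B, hB, b1, b2⟩ : ∃ B > 0, M * (κ * B) ^ μ ≤ A / 2 ∧ C * B ^ 2 ≤ A / 4 := by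
    have t1 : Tendsto (fun B : ℝ => M * (κ * B) ^ μ) (nhds 0) (nhds (M * (κ * 0) ^ μ)) := by
      apply Continuous.tendsto
      exact continuous_const.mul ((continuous_const.mul continuous_id).rpow_const
        (fun _ => Or.inr (by linarith)))
    have t2 : Tendsto (fun B : ℝ => C * B ^ 2) (nhds 0) (nhds (C * 0 ^ 2)) := by
      apply Continuous.tendsto; fun_prop
    rw [mul_zero, Real.zero_rpow (by linarith), mul_zero] at t1
    rw [show C * (0:ℝ) ^ 2 = 0 by ring] at t2
    have e1 := (t1.eventually (gt_mem_nhds (half_pos hA0))).filter_mono (nhdsWithin_le_nhds (s := Set.Ioi 0))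
    have e2 := (t2.eventually (gt_mem_nhds (by positivity : 0 < A / 4))).filter_mono
      (nhdsWithin_le_nhds (s := Set.Ioi 0))
    obtain ⟨B, h1, h2, h3⟩ := (e1.and (e2.and self_mem_nhdsWithin)).exists
    exact ⟨B, h3, h1.le, h2.le⟩
  obtain ⟨N, n0, hbar⟩ := upper_small (ℓ := ℓ) hT hc hC hB.le hκ0 hκC hμ hμ2
    (by linarith : 0 < ρ) hM hG hρμ hA0 b1 b2 ((hW B hB).mono fun n h => h.desc) hL
  have hlow := lower (ℓ := ℓ) hT hc hC hB.le hκ0 hκC (by linarith : 0 < μ) (by linarith : 0 < ρ) hM hG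
    hA0 (by linarith) (hW B hB) hL hF
  have hr := rate hT hc hC hB.le (by linarith) hμ2 (by linarith) (by linarith) (by linarith) (hW B hB) hlow hbar
  obtain ⟨K, hK, hmv⟩ := moves (F := F) (G := G) (θ := θ) hT hc hC hρ
  set b := ε / K with hb
  have hb0 : 0 < b := by positivity
  have hm' := hmv ℓ b hb0 (hW b hb0) (by
    have := pow_small hT.lim (a := 2 * ρ - 1) (b := μ * ρ) (x := K1 * A) (y := b ^ 2) (by nlinarith) (by positivity)
    filter_upwards [hr, this] with n h1 h2
    refine h1.1.trans ?_
    rw [show 1 - 2 * ρ = -(2 * ρ - 1) by ring]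
    exact h2)
  filter_upwards [hr, hm', hT.lim.eventually_ge_atTop 1] with n h1 h2 h3
  have p1 : 0 < γ n ^ (-(μ * ρ)) := Real.rpow_pos_of_pos (by linarith) _
  have p2 : 0 < γ n ^ (-(ρ - 1)) := Real.rpow_pos_of_pos (by linarith) _
  refine ⟨h1.1.trans ?_, h1.2.trans ?_, fun k hk => (h2 k hk).trans ?_⟩
  · gcongr
    calc K1 * A ≤ K1 * (ε / K1) := by gcongr; exact min_le_left _ _
      _ = ε := by field_simp
  · gcongr
    calc K2 * A ≤ K2 * (ε / K2) := by gcongr; exact min_le_right _ _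
      _ = ε := by field_simp
  · rw [show 1 - ρ = -(ρ - 1) by ring, hb, mul_div_cancel₀ _ hK.ne']

lemma F_conv {B : ℝ} (hT : TimeH γ m σ) (hc : 0 < c) (hC : 0 < C) (hB : 0 < B) (hρ : 1 < ρ)
    (hW : ∀ᶠ n in atTop, WinH c C B ρ γ F G m θ n)
    (hbd : ∃ R, ∀ n, R ≤ F n) : ∃ ℓ, Tendsto F atTop (nhds ℓ) := by
  obtain ⟨R, hR⟩ := hbd
  obtain ⟨N, hN⟩ := eventually_atTop.1 (hW.and (hT.step.and (hT.lim.eventually_ge_atTop (4 * ρ))))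
  have hσ := hT.σpos
  have hρ1 : 0 < ρ - 1 := by linarith
  set κ := 4 / 3 / ((ρ - 1) * σ) with hκ
  have hκ0 : 0 < κ := by positivity
  set Q := C * B ^ 2 * κ with hQ
  have hQ0 : 0 < Q := by positivity
  set V : ℕ → ℝ := fun n => F n + Q * γ n ^ (1 - ρ) with hV
  have hmN : ∀ n ≥ N, n < m n := fun n hn => (hN n hn).2.1.1
  have hpos : ∀ n ≥ N, 0 < Q * γ n ^ (1 - ρ) := fun n hn =>
    mul_pos hQ0 (Real.rpow_pos_of_pos (by have := (hN n hn).2.2; linarith) _)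
  have hη : ∀ n ≥ N, C * (B * γ n ^ (-ρ)) ^ 2 ≤ Q * γ n ^ (1 - ρ) - Q * γ (m n) ^ (1 - ρ) := by
    intro n hn
    obtain ⟨hw, ⟨s1, s2, s3⟩, g4⟩ := hN n hn
    have hg0 : 0 < γ n := by linarith
    have htel := telescope hg0 hρ g4 hσ s2 s3
    rw [← hκ] at htel
    have hp1 : γ n ^ (-ρ) ≤ 1 := Real.rpow_le_one_of_one_le_of_nonpos (by linarith) (by linarith)
    have hp0 : 0 < γ n ^ (-ρ) := Real.rpow_pos_of_pos hg0 _
    calc C * (B * γ n ^ (-ρ)) ^ 2 = C * B ^ 2 * (γ n ^ (-ρ) * γ n ^ (-ρ)) := by ring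
      _ ≤ C * B ^ 2 * (γ n ^ (-ρ) * 1) := by gcongr
      _ = C * B ^ 2 * γ n ^ (-ρ) := by ring
      _ ≤ C * B ^ 2 * (κ * (γ n ^ (1 - ρ) - γ (m n) ^ (1 - ρ))) := by gcongr
      _ = _ := by rw [hQ]; ring
  have hdec : ∀ n ≥ N, c * G n ^ 2 ≤ V n - V (m n) := by
    intro n hn
    have h1 := (hN n hn).1.desc
    have h2 := hη n hn
    simp only [hV]; linarith
  set x : ℕ → ℕ := fun j => m^[j] N with hx
  have hx1 : ∀ j, x (j + 1) = m (x j) := fun j => Function.iterate_succ_apply' m j N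
  have hxN : ∀ j, N + j ≤ x j := by
    intro j
    induction j with
    | zero => simp [hx]
    | succ j ih =>
      rw [hx1]; have := hmN (x j) (by omega); omega
  have hxN' : ∀ j, N ≤ x j := fun j => by have := hxN j; omega
  have hanti : Antitone (fun j => V (x j)) := by
    refine antitone_nat_of_succ_le fun j => ?_
    have h1 := hdec (x j) (hxN' j)
    have h2 : 0 ≤ c * G (x j) ^ 2 := by positivity
    rw [hx1]; linarith
  have hbelow : BddBelow (Set.range fun j => V (x j)) := by
    refine ⟨R, ?_⟩
    rintro _ ⟨j, rfl⟩
    have h1 := hR (x j)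
    have h2 := hpos (x j) (hxN' j)
    simp only [hV]; linarith
  have htend := tendsto_atTop_ciInf hanti hbelow
  set ℓ := ⨅ j, V (x j) with hℓ
  have hℓle : ∀ j, ℓ ≤ V (x j) := fun j => ciInf_le hbelow j
  refine ⟨ℓ, ?_⟩
  rw [Metric.tendsto_atTop]
  intro ε0 hε0
  set ε := ε0 / (3 + C / c) with hε
  have hε1 : 0 < ε := by positivity
  have hεeq : (3 + C / c) * ε = ε0 := by rw [hε]; field_simp
  have hsmall : ∀ᶠ n in atTop, Q * γ n ^ (1 - ρ) < ε := by
    have h1 : Tendsto (fun n => γ n ^ (-(ρ - 1))) atTop (nhds 0) :=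
      (tendsto_rpow_neg_atTop hρ1).comp hT.lim
    have h2 : Tendsto (fun n => Q * γ n ^ (-(ρ - 1))) atTop (nhds 0) := by simpa using h1.const_mul Q
    simpa using h2.eventually (gt_mem_nhds hε1)
  obtain ⟨N2, hN2⟩ := eventually_atTop.1 hsmall
  obtain ⟨j0, hj0, hj1⟩ := ((htend.eventually (gt_mem_nhds (by linarith : ℓ < ℓ + ε))).and
    (eventually_ge_atTop N2)).exists
  refine ⟨x j0, fun k hk => ?_⟩
  obtain ⟨n, hn, ⟨j, hj, rfl⟩, h1, h2⟩ := chain_ind (P := fun n => ∃ j ≥ j0, n = x j) hmN (hxN' j0)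
    ⟨j0, le_rfl, rfl⟩ (by
      rintro n hn ⟨j, hj, rfl⟩
      exact ⟨j + 1, by omega, (hx1 j).symm⟩) k hk
  have hxj := hxN' j
  have e1 := hdec (x j) hxj
  have e2 := hℓle j
  have e3 := hℓle (j + 1)
  rw [hx1] at e3
  have e4 : V (x j) < ℓ + ε := (hanti hj).trans_lt hj0
  have e5 := hN2 (x j) (by have := hxN j; omega)
  have e6 := hη (x j) hxj
  have e7 := hpos (m (x j)) (by have := hmN (x j) hxj; omega)
  have e8 := (hN (x j) hxj).1.var k h1 h2.le
  have e9 := hpos (x j) hxj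
  have e10 : C * G (x j) ^ 2 ≤ C / c * ε := by
    have : G (x j) ^ 2 ≤ ε / c := by rw [le_div_iff₀ hc]; linarith
    calc C * G (x j) ^ 2 ≤ C * (ε / c) := by gcongr
      _ = _ := by ring
  have e11 : V (x j) = F (x j) + Q * γ (x j) ^ (1 - ρ) := rfl
  rw [Real.dist_eq, abs_lt]
  have := abs_le.1 e8
  constructor <;> nlinarith
end SGR
namespace SGR

lemma abel {E : Type*} [NormedAddCommGroup E] [NormedSpace ℝ E] {w : ℕ → ℝ} {y : ℕ → E} {n k : ℕ} {B : ℝ}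
    (hnk : n ≤ k) (hw : ∀ i ≥ n, w (i + 1) ≤ w i) (hw0 : ∀ i ≥ n, 0 ≤ w i)
    (hS : ∀ j, n ≤ j → j ≤ k → ‖∑ i ∈ Finset.Ico n j, y i‖ ≤ B) :
    ‖∑ i ∈ Finset.Ico n k, w i • y i‖ ≤ w n * B := by
  have key : ∀ j, n ≤ j → j ≤ k → ‖∑ i ∈ Finset.Ico n j, w i • y i - w j • ∑ i ∈ Finset.Ico n j, y i‖
      ≤ (w n - w j) * B := by
    intro j hj
    induction j, hj using Nat.le_induction with
    | base => intro _; simp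
    | succ j hj ih =>
      intro hjk
      have h1 := ih (by omega)
      have h2 := hS (j + 1) (by omega) hjk
      have h3 := hw j hj
      have : ∑ i ∈ Finset.Ico n (j + 1), w i • y i - w (j + 1) • ∑ i ∈ Finset.Ico n (j + 1), y i
          = (∑ i ∈ Finset.Ico n j, w i • y i - w j • ∑ i ∈ Finset.Ico n j, y i)
            + (w j - w (j + 1)) • ∑ i ∈ Finset.Ico n (j + 1), y i := by
        rw [Finset.sum_Ico_succ_top hj, Finset.sum_Ico_succ_top hj]
        module
      rw [this]
      have h4 : ‖(w j - w (j + 1)) • ∑ i ∈ Finset.Ico n (j + 1), y i‖ ≤ (w j - w (j + 1)) * B := by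
        rw [norm_smul, Real.norm_of_nonneg (by linarith)]
        have : 0 ≤ w j - w (j + 1) := by linarith
        gcongr
      refine (norm_add_le _ _).trans ?_
      linarith
  have h1 := key k hnk le_rfl
  have h2 : ‖w k • ∑ i ∈ Finset.Ico n k, y i‖ ≤ w k * B := by
    rw [norm_smul, Real.norm_of_nonneg (hw0 k hnk)]
    have := hw0 k hnk
    have := hS k hnk le_rfl
    gcongr
  have h3 := norm_add_le (∑ i ∈ Finset.Ico n k, w i • y i - w k • ∑ i ∈ Finset.Ico n k, y i)
    (w k • ∑ i ∈ Finset.Ico n k, y i)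
  rw [sub_add_cancel] at h3
  linarith

variable {E : Type*} [NormedAddCommGroup E] [InnerProductSpace ℝ E] [CompleteSpace E]

lemma taylor {f : E → ℝ} (hfd : Differentiable ℝ f) {S : Set E} (hS : Convex ℝ S) {L : ℝ} (hL : 0 ≤ L)
    (hlip : ∀ x ∈ S, ∀ y ∈ S, ‖gradient f x - gradient f y‖ ≤ L * ‖x - y‖) {x y : E}
    (hx : x ∈ S) (hy : y ∈ S) :
    |f y - f x - inner ℝ (gradient f x) (y - x)| ≤ L * ‖y - x‖ ^ 2 := by
  have hseg : segment ℝ x y ⊆ S := hS.segment_subset hx hy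
  have h := (convex_segment x y).norm_image_sub_le_of_norm_hasFDerivWithin_le' (f := f)
    (f' := fun z => InnerProductSpace.toDual ℝ E (gradient f z))
    (φ := InnerProductSpace.toDual ℝ E (gradient f x)) (C := L * ‖y - x‖)
    (fun z _ => ((hfd z).hasGradientAt.hasFDerivAt).hasFDerivWithinAt)
    (by
      intro z hz
      rw [← map_sub, LinearIsometryEquiv.norm_map]
      refine (hlip z (hseg hz) x hx).trans ?_
      have : ‖z - x‖ ≤ ‖y - x‖ := by
        obtain ⟨a, b, ha, hb, hab, rfl⟩ := hz
        have : a • x + b • y - x = b • (y - x) := by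
          rw [show a = 1 - b by linarith]; module
        rw [this, norm_smul, Real.norm_of_nonneg hb]
        have : 0 ≤ ‖y - x‖ := norm_nonneg _
        nlinarith
      gcongr)
    (left_mem_segment ℝ x y) (right_mem_segment ℝ x y)
  rw [InnerProductSpace.toDual_apply_apply, Real.norm_eq_abs] at h
  calc _ ≤ _ := h
    _ = _ := by ring

lemma window {f : E → ℝ} (hfd : Differentiable ℝ f) {S : Set E} (hS : Convex ℝ S) {L τ η : ℝ}
    (hL : 1 ≤ L) (hτ : 0 < τ) (hLτ : 40 * L * τ ≤ 1) (hη : 0 ≤ η)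
    (hlip : ∀ x ∈ S, ∀ y ∈ S, ‖gradient f x - gradient f y‖ ≤ L * ‖x - y‖)
    {α γ : ℕ → ℝ} (hα : ∀ n, 0 < α n) (hγ : ∀ n, γ n = ∑ i ∈ Finset.range n, α i)
    {θ ξ : ℕ → E} (hrec : ∀ n, θ (n + 1) = θ n - α n • (gradient f (θ n) + ξ n))
    (hθ : ∀ n, θ n ∈ S) {n m : ℕ} (hnm : n ≤ m) (h1 : τ / 2 ≤ γ m - γ n) (h2 : γ m - γ n ≤ τ)
    (hnoise : ∀ k, n ≤ k → k ≤ m → ‖∑ i ∈ Finset.Ico n k, α i • ξ i‖ ≤ η) :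
    f (θ m) ≤ f (θ n) - τ / 8 * ‖gradient f (θ n)‖ ^ 2 + (8 / τ + 8 * L + 3) * η ^ 2 ∧
    ∀ k, n ≤ k → k ≤ m →
      |f (θ k) - f (θ n)| ≤ (8 / τ + 8 * L + 3) * (‖gradient f (θ n)‖ ^ 2 + η ^ 2) ∧
      ‖θ k - θ n‖ ≤ (8 / τ + 8 * L + 3) * (‖gradient f (θ n)‖ + η) := by
  set g := gradient f with hg
  set G := ‖g (θ n)‖ with hG
  have hG0 : 0 ≤ G := norm_nonneg _
  have hτ1 : τ ≤ 1 := by nlinarith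
  have hsum : ∀ k, n ≤ k → ∑ i ∈ Finset.Ico n k, α i = γ k - γ n := by
    intro k hk; rw [hγ, hγ, Finset.sum_Ico_eq_sub _ hk]
  have hmono : ∀ k, k ≤ m → γ k ≤ γ m := by
    intro k hk; rw [hγ, hγ]
    exact Finset.sum_le_sum_of_subset_of_nonneg (Finset.range_mono hk) (fun i _ _ => (hα i).le)
  have hform : ∀ k, n ≤ k → θ k - θ n + (γ k - γ n) • g (θ n) =
      - ∑ i ∈ Finset.Ico n k, α i • (g (θ i) - g (θ n)) - ∑ i ∈ Finset.Ico n k, α i • ξ i := by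
    intro k hk
    rw [← hsum k hk]
    induction k, hk using Nat.le_induction with
    | base => simp
    | succ k hk ih =>
      rw [Finset.sum_Ico_succ_top hk, Finset.sum_Ico_succ_top hk, Finset.sum_Ico_succ_top hk, hrec k, add_smul]
      have : θ k = - ∑ i ∈ Finset.Ico n k, α i • (g (θ i) - g (θ n)) - ∑ i ∈ Finset.Ico n k, α i • ξ i
        + θ n - (∑ i ∈ Finset.Ico n k, α i) • g (θ n) := by rw [← ih]; abel
      generalize g (θ k) = gk
      rw [this]; module
  set D := 2 * (τ * G + η) with hD
  have hD0 : 0 ≤ D := by positivity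
  have herr : ∀ k, n ≤ k → k ≤ m → (∀ i, n ≤ i → i < k → ‖θ i - θ n‖ ≤ D) →
      ‖θ k - θ n + (γ k - γ n) • g (θ n)‖ ≤ τ * L * D + η := by
    intro k hk hkm hi
    rw [hform k hk]
    have e1 : ‖∑ i ∈ Finset.Ico n k, α i • (g (θ i) - g (θ n))‖ ≤ τ * L * D := by
      calc _ ≤ ∑ i ∈ Finset.Ico n k, α i * (L * D) := by
            refine norm_sum_le_of_le _ fun i hi' => ?_
            rw [Finset.mem_Ico] at hi'
            rw [norm_smul, Real.norm_of_nonneg (hα i).le]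
            have h3 := hlip _ (hθ i) _ (hθ n)
            have h4 := hi i hi'.1 hi'.2
            have : ‖g (θ i) - g (θ n)‖ ≤ L * D := h3.trans (by gcongr)
            have := (hα i).le
            gcongr
        _ = (γ k - γ n) * (L * D) := by rw [← Finset.sum_mul, hsum k hk]
        _ ≤ τ * (L * D) := by gcongr; linarith [hmono k hkm]
        _ = _ := by ring
    have e2 := hnoise k hk hkm
    calc _ ≤ ‖- ∑ i ∈ Finset.Ico n k, α i • (g (θ i) - g (θ n))‖ + ‖∑ i ∈ Finset.Ico n k, α i • ξ i‖ := norm_sub_le _ _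
      _ ≤ _ := by rw [norm_neg]; linarith
  have hmove : ∀ k, n ≤ k → k ≤ m → ‖θ k - θ n‖ ≤ D := by
    intro k
    induction k using Nat.strong_induction_on with
    | _ k ih =>
      intro hk hkm
      have e1 := herr k hk hkm (fun i hi1 hi2 => ih i hi2 hi1 (by omega))
      have e2 : ‖(γ k - γ n) • g (θ n)‖ ≤ τ * G := by
        have h0 : 0 ≤ γ k - γ n := by
          rw [← hsum k hk]; exact Finset.sum_nonneg fun i _ => (hα i).le
        rw [norm_smul, Real.norm_of_nonneg h0]
        gcongr; linarith [hmono k hkm]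
      have e3 := norm_sub_le (θ k - θ n + (γ k - γ n) • g (θ n)) ((γ k - γ n) • g (θ n))
      rw [add_sub_cancel_right] at e3
      have e4 : τ * L * D ≤ 1 / 2 * D := by gcongr; linarith
      linarith
  have hLD : L * D ^ 2 ≤ 8 * L * τ ^ 2 * G ^ 2 + 8 * L * η ^ 2 := by
    have : D ^ 2 ≤ 8 * τ ^ 2 * G ^ 2 + 8 * η ^ 2 := by rw [hD]; nlinarith [sq_nonneg (τ * G - η)]
    nlinarith
  have h8τ : 0 < 8 / τ := by positivity
  constructor
  · have e1 := herr m hnm le_rfl (fun i hi1 hi2 => hmove i hi1 hi2.le)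
    have e2 := (abs_le.1 (taylor hfd hS (by linarith) hlip (hθ n) (hθ m))).2
    have e3 : inner ℝ (g (θ n)) (θ m - θ n) ≤ G * (τ * L * D + η) - (γ m - γ n) * G ^ 2 := by
      have : θ m - θ n = (θ m - θ n + (γ m - γ n) • g (θ n)) - (γ m - γ n) • g (θ n) := by abel
      rw [this, inner_sub_right, inner_smul_right, real_inner_self_eq_norm_sq]
      have e4 := real_inner_le_norm (g (θ n)) (θ m - θ n + (γ m - γ n) • g (θ n))
      have e5 : G * ‖θ m - θ n + (γ m - γ n) • g (θ n)‖ ≤ G * (τ * L * D + η) := by gcongr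
      linarith
    have e6 : L * ‖θ m - θ n‖ ^ 2 ≤ L * D ^ 2 := by
      have := hmove m hnm le_rfl
      gcongr
    have e7 : τ / 2 * G ^ 2 ≤ (γ m - γ n) * G ^ 2 := by gcongr
    have e8 : G * (τ * L * D) ≤ 2 * L * τ ^ 2 * G ^ 2 + G * η := by
      have : 2 * (L * τ) * (G * η) ≤ 1 * (G * η) := by
        have : 0 ≤ G * η := by positivity
        gcongr; linarith
      rw [hD]; nlinarith
    have e9 : 10 * L * τ ^ 2 * G ^ 2 ≤ τ / 4 * G ^ 2 := by
      gcongr; nlinarith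
    have e10 : 2 * (G * η) ≤ τ / 8 * G ^ 2 + 8 / τ * η ^ 2 := by
      have : τ / 8 * G ^ 2 + 8 / τ * η ^ 2 - 2 * (G * η) = 1 / (8 * τ) * (τ * G - 8 * η) ^ 2 := by
        field_simp; ring
      have h0 : 0 ≤ 1 / (8 * τ) * (τ * G - 8 * η) ^ 2 := by positivity
      linarith
    have e11 : 0 ≤ 3 * η ^ 2 := by positivity
    nlinarith
  · intro k hk hkm
    have e0 := hmove k hk hkm
    have e1 := taylor hfd hS (by linarith) hlip (hθ n) (hθ k)
    constructor
    · have e2 : |inner ℝ (g (θ n)) (θ k - θ n)| ≤ G * D :=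
        (abs_real_inner_le_norm _ _).trans (by gcongr)
      have e3 : L * ‖θ k - θ n‖ ^ 2 ≤ L * D ^ 2 := by gcongr
      have e4 : |f (θ k) - f (θ n)| ≤ G * D + L * D ^ 2 := by
        have := abs_add_le (f (θ k) - f (θ n) - inner ℝ (g (θ n)) (θ k - θ n)) (inner ℝ (g (θ n)) (θ k - θ n))
        rw [sub_add_cancel] at this
        linarith
      have e5 : G * D ≤ 3 * G ^ 2 + η ^ 2 := by
        have : τ * G ^ 2 ≤ 1 * G ^ 2 := by gcongr
        rw [hD]; nlinarith [sq_nonneg (G - η)]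
      have e6 : 8 * L * τ ^ 2 * G ^ 2 ≤ 8 * L * 1 * G ^ 2 := by
        gcongr; nlinarith
      have e7 : 0 ≤ 8 / τ * (G ^ 2 + η ^ 2) := by positivity
      have e8 : 0 ≤ η ^ 2 := by positivity
      nlinarith
    · refine e0.trans ?_
      rw [hD]
      have : τ * G ≤ 1 * G := by gcongr
      have e7 : 0 ≤ (8 / τ + 8 * L) * (G + η) := by positivity
      nlinarith

lemma winH_path {f : E → ℝ} (hfd : Differentiable ℝ f) {S : Set E} (hS : Convex ℝ S) {L r : ℝ}
    (hL : 1 ≤ L) (hr : 0 ≤ r)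
    (hlip : ∀ x ∈ S, ∀ y ∈ S, ‖gradient f x - gradient f y‖ ≤ L * ‖x - y‖)
    {α γ : ℕ → ℝ} (hα : ∀ n, 0 < α n) (hα0 : Tendsto α atTop (nhds 0))
    (hγ : ∀ n, γ n = ∑ i ∈ Finset.range n, α i) (hγt : Tendsto γ atTop atTop)
    {θ ξ : ℕ → E} (hrec : ∀ n, θ (n + 1) = θ n - α n • (gradient f (θ n) + ξ n))
    (hθ : ∀ n, θ n ∈ S) :
    ∃ (c C σ : ℝ) (m : ℕ → ℕ), 0 < c ∧ 0 < C ∧ TimeH γ m σ ∧ ∀ B > 0,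
      (∀ᶠ n in atTop, ∀ k, n ≤ k → γ (k + 1) - γ n ≤ 1 →
        ‖∑ i ∈ Finset.Icc n k, (α i * γ i ^ r) • ξ i‖ ≤ B) →
      ∀ ρ ≤ r, ∀ᶠ n in atTop,
        WinH c C B ρ γ (fun n => f (θ n)) (fun n => ‖gradient f (θ n)‖) m θ n := by
  set τ := 1 / (40 * L) with hτ
  have hτ0 : 0 < τ := by positivity
  have hLτ : 40 * L * τ ≤ 1 := by rw [hτ]; apply le_of_eq; field_simp
  have hτ1 : τ ≤ 1 := by nlinarith
  have hsucc : ∀ n, γ (n + 1) = γ n + α n := fun n => by rw [hγ, hγ, Finset.sum_range_succ]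
  have hmono : Monotone γ := monotone_nat_of_le_succ fun n => by rw [hsucc]; linarith [hα n]
  obtain ⟨N0, hN0⟩ := eventually_atTop.1 (hα0.eventually (gt_mem_nhds (half_pos hτ0)))
  have hex : ∀ n, ∃ k, N0 ≤ n → n < k ∧ γ n + τ / 2 ≤ γ k ∧ γ k ≤ γ n + τ := by
    intro n
    by_cases hn : N0 ≤ n
    · have hE : ∃ k, γ n + τ / 2 ≤ γ k := (hγt.eventually_ge_atTop (γ n + τ / 2)).exists
      classical
      have h1 := Nat.find_spec hE
      have h2 : n < Nat.find hE := by
        by_contra h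
        have := hmono (not_lt.1 h)
        linarith
      obtain ⟨j, hj⟩ : ∃ j, Nat.find hE = j + 1 := ⟨Nat.find hE - 1, by omega⟩
      have h3 := Nat.find_min hE (m := j) (by omega)
      refine ⟨Nat.find hE, fun _ => ⟨h2, h1, ?_⟩⟩
      rw [hj, hsucc]
      have := hN0 j (by omega)
      linarith
    · exact ⟨0, fun h => absurd h hn⟩
  choose m hm using hex
  refine ⟨τ / 8, 8 / τ + 8 * L + 3, τ / 2, m, by positivity, by positivity,
    ⟨hmono, hγt, by positivity, ?_⟩, ?_⟩
  · filter_upwards [eventually_ge_atTop N0] with n hn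
    obtain ⟨a, b, c⟩ := hm n hn
    exact ⟨a, b, by linarith⟩
  · intro B hB hno ρ hρ
    filter_upwards [hno, eventually_ge_atTop N0, hγt.eventually_ge_atTop 1] with n h1 h2 h3
    obtain ⟨a, b, c⟩ := hm n h2
    have hgi : ∀ i ≥ n, 0 < γ i := fun i hi => by have := hmono hi; linarith
    have hp : 0 < γ n ^ (-ρ) := Real.rpow_pos_of_pos (hgi n le_rfl) _
    have hw := window hfd hS hL hτ0 hLτ (η := B * γ n ^ (-ρ)) (by positivity) hlip hα hγ hrec hθ
      (n := n) (m := m n) a.le (by linarith) (by linarith) (by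
        intro k hk hkm
        have hab := abel (w := fun i => γ i ^ (-r)) (y := fun i => (α i * γ i ^ r) • ξ i) (B := B) hk
          (fun i hi => Real.rpow_le_rpow_of_nonpos (hgi i hi) (hmono (Nat.le_succ i)) (by linarith))
          (fun i hi => (Real.rpow_pos_of_pos (hgi i hi) _).le)
          (by
            intro j hj hjk
            rcases hj.eq_or_lt with h | h
            · subst h; simp; exact hB.le
            · obtain ⟨j', rfl⟩ : ∃ j', j = j' + 1 := ⟨j - 1, by omega⟩
              have : Finset.Ico n (j' + 1) = Finset.Icc n j' := by
                ext x; simp only [Finset.mem_Ico, Finset.mem_Icc]; omega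
              rw [this]
              apply h1 j' (by omega)
              have := hmono (hjk.trans hkm)
              linarith)
        have heq : ∑ i ∈ Finset.Ico n k, (γ i ^ (-r)) • (α i * γ i ^ r) • ξ i = ∑ i ∈ Finset.Ico n k, α i • ξ i := by
          refine Finset.sum_congr rfl fun i hi => ?_
          rw [smul_smul]
          congr 1
          have := Real.rpow_pos_of_pos (hgi i (Finset.mem_Ico.1 hi).1) r
          rw [Real.rpow_neg (hgi i (Finset.mem_Ico.1 hi).1).le]
          field_simp
        rw [heq] at hab
        refine hab.trans ?_
        rw [mul_comm]
        have : γ n ^ (-r) ≤ γ n ^ (-ρ) := Real.rpow_le_rpow_of_exponent_le h3 (by linarith)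
        gcongr)
    exact ⟨hw.1, fun k hk hkm => (hw.2 k hk hkm).1, fun k hk hkm => (hw.2 k hk hkm).2⟩
end SGR
namespace SGR

lemma noise_bd {E : Type*} [NormedAddCommGroup E] [NormedSpace ℝ E] {γ : ℕ → ℝ}
    (hγt : Tendsto γ atTop atTop) {v : ℕ → E} {n k a : ℕ}
    (ha : a = sSup {k | n ≤ k ∧ γ k - γ n ≤ 1}) (hk : n ≤ k) (hk1 : γ (k+1) - γ n ≤ 1) :
    ‖∑ i ∈ Finset.Icc n k, v i‖ ≤ ⨆ k ∈ Set.Ico n a, ‖∑ i ∈ Finset.Icc n k, v i‖ := by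
  have hbd : BddAbove {k | n ≤ k ∧ γ k - γ n ≤ 1} := by
    obtain ⟨N, hN⟩ := eventually_atTop.1 (hγt.eventually_gt_atTop (γ n + 1))
    refine ⟨N, fun j hj => ?_⟩
    by_contra h
    have := hN j (by omega)
    have := hj.2
    linarith
  have hka : k + 1 ≤ a := by rw [ha]; exact le_csSup hbd ⟨by omega, hk1⟩
  have hmem : k ∈ Set.Ico n a := ⟨hk, by omega⟩
  have hB : BddAbove (Set.range fun k => ⨆ (_ : k ∈ Set.Ico n a), ‖∑ i ∈ Finset.Icc n k, v i‖) := by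
    refine ⟨∑ k ∈ Finset.Ico n a, ‖∑ i ∈ Finset.Icc n k, v i‖, ?_⟩
    rintro _ ⟨j, rfl⟩
    by_cases hj : j ∈ Set.Ico n a
    · simp only [hj, ciSup_unique]
      exact Finset.single_le_sum (f := fun k => ‖∑ i ∈ Finset.Icc n k, v i‖)
        (fun i _ => norm_nonneg _) (Finset.mem_Ico.2 hj)
    · simp only [hj, Real.iSup_of_isEmpty]
      positivity
  have := le_ciSup hB k
  simpa only [hmem, ciSup_unique] using this

lemma noise_nonneg {E : Type*} [NormedAddCommGroup E] {v : ℕ → E} {n a : ℕ} :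
    0 ≤ ⨆ k ∈ Set.Ico n a, ‖∑ i ∈ Finset.Icc n k, v i‖ :=
  Real.iSup_nonneg fun _ => Real.iSup_nonneg fun _ => norm_nonneg _

lemma rho_props {r μ ρ : ℝ} (hr : 1 < r) (hμ : μ ∈ Set.Ioc (1:ℝ) 2)
    (h : ρ = if μ < 2 then min r (1 / (2 - μ)) else r) : 1 < ρ ∧ ρ ≤ r ∧ ρ * (2 - μ) ≤ 1 := by
  obtain ⟨h1, h2⟩ := hμ
  split_ifs at h with hc
  · have h3 : 0 < 2 - μ := by linarith
    have h4 : 1 < 1 / (2 - μ) := by rw [lt_div_iff₀ h3]; linarith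
    refine ⟨by rw [h]; exact lt_min hr h4, by rw [h]; exact min_le_left _ _, ?_⟩
    rw [← le_div_iff₀ h3, h]; exact min_le_right _ _
  · have : μ = 2 := by linarith
    subst this
    subst h
    exact ⟨hr, le_rfl, by norm_num⟩

/-- Conclusion of the rate estimates in normalised form. -/
lemma normalise {E : Type*} [NormedAddCommGroup E] {γ F G : ℕ → ℝ} {θ : ℕ → E} {ℓ K μ ρ : ℝ} {x : E}
    (hγt : Tendsto γ atTop atTop) (hθ : Tendsto θ atTop (nhds x))
    (h : ∀ᶠ n in atTop, |F n - ℓ| ≤ K * γ n ^ (-(μ*ρ)) ∧ G n ^ 2 ≤ K * γ n ^ (-(μ*ρ)) ∧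
      ∀ k ≥ n, ‖θ k - θ n‖ ≤ K * γ n ^ (-(ρ-1))) :
    ∀ᶠ n in atTop, γ n ^ (μ*ρ) * G n ^ 2 ≤ K ∧ γ n ^ (μ*ρ) * |F n - ℓ| ≤ K ∧
      γ n ^ (ρ-1) * ‖θ n - x‖ ≤ K := by
  filter_upwards [h, hγt.eventually_gt_atTop 0] with n hn hg
  have key : ∀ s X : ℝ, X ≤ K * γ n ^ (-s) → γ n ^ s * X ≤ K := by
    intro s X hX
    have hp : 0 < γ n ^ s := Real.rpow_pos_of_pos hg s
    rw [Real.rpow_neg hg.le] at hX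
    calc γ n ^ s * X ≤ γ n ^ s * (K * (γ n ^ s)⁻¹) := by gcongr
      _ = K := by field_simp
  refine ⟨key _ _ hn.2.1, key _ _ hn.1, key _ _ ?_⟩
  have ht : Tendsto (fun k => ‖θ k - θ n‖) atTop (nhds ‖x - θ n‖) := (hθ.sub_const _).norm
  rw [norm_sub_rev]
  exact le_of_tendsto ht (eventually_atTop.2 ⟨n, hn.2.2⟩)

lemma path {d : ℕ} {f : EuclideanSpace ℝ (Fin d) → ℝ}
    (hfd : Differentiable ℝ f)
    (hlip : LocallyLipschitz (fun x => gradient f x))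
    {α : ℕ → ℝ} (hαpos : ∀ n, 0 < α n)
    {θ ξ : ℕ → EuclideanSpace ℝ (Fin d)}
    (hrec : ∀ n, θ (n + 1) = θ n - α n • (gradient f (θ n) + ξ n))
    (hα0 : Tendsto α atTop (nhds 0))
    {γ : ℕ → ℝ} (hγ : ∀ n, γ n = ∑ i ∈ Finset.range n, α i)
    (hαdiv : Tendsto γ atTop atTop)
    {R : ℝ} (hR : ∀ n, ‖θ n‖ ≤ R)
    {r X : ℝ} (hr : 1 < r) (hX : 0 ≤ X)
    (hno : ∀ B > X, ∀ᶠ n in atTop, ∀ k, n ≤ k → γ (k+1) - γ n ≤ 1 →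
      ‖∑ i ∈ Finset.Icc n k, (α i * γ i ^ r) • ξ i‖ ≤ B)
    (hLoj : ∀ Q : Set (EuclideanSpace ℝ (Fin d)), IsCompact Q → ∀ b ∈ f '' Q,
      ∃ δ μ M : ℝ, δ ∈ Set.Ioc (0 : ℝ) 1 ∧ μ ∈ Set.Ioc (1 : ℝ) 2 ∧ 1 ≤ M ∧
        ∀ x ∈ Q, |f x - b| ≤ δ → |f x - b| ≤ M * ‖gradient f x‖ ^ μ)
    {δl μl Ml : EuclideanSpace ℝ (Fin d) → ℝ}
    (hδl : ∀ x, δl x ∈ Set.Ioc (0 : ℝ) 1)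
    (hμl : ∀ x, μl x ∈ Set.Ioc (1 : ℝ) 2)
    (hMl : ∀ x, 1 ≤ Ml x)
    (hLocal : ∀ x y, ‖y - x‖ ≤ δl x → |f y - f x| ≤ Ml x * ‖gradient f y‖ ^ μl x) :
    ∃ x, Tendsto θ atTop (nhds x) ∧
      (∃ K > 0, ∀ᶠ n in atTop,
        γ n ^ (μl x * (if μl x < 2 then min r (1 / (2 - μl x)) else r)) * ‖gradient f (θ n)‖ ^ 2 ≤ K ∧
        γ n ^ (μl x * (if μl x < 2 then min r (1 / (2 - μl x)) else r)) * |f (θ n) - f x| ≤ K ∧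
        γ n ^ ((if μl x < 2 then min r (1 / (2 - μl x)) else r) - 1) * ‖θ n - x‖ ≤ K) ∧
      (X = 0 → (μl x = 2 ∨ r < 1 / (2 - μl x)) → ∀ ε > 0, ∀ᶠ n in atTop,
        γ n ^ (μl x * (if μl x < 2 then min r (1 / (2 - μl x)) else r)) * ‖gradient f (θ n)‖ ^ 2 ≤ ε ∧
        γ n ^ (μl x * (if μl x < 2 then min r (1 / (2 - μl x)) else r)) * |f (θ n) - f x| ≤ ε ∧
        γ n ^ ((if μl x < 2 then min r (1 / (2 - μl x)) else r) - 1) * ‖θ n - x‖ ≤ ε) := by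
  set S : Set (EuclideanSpace ℝ (Fin d)) := Metric.closedBall 0 R with hSdef
  have hScomp : IsCompact S := isCompact_closedBall 0 R
  have hSconv : Convex ℝ S := convex_closedBall 0 R
  have hθS : ∀ n, θ n ∈ S := fun n => by simpa [hSdef] using hR n
  obtain ⟨L0, hL0⟩ := (hlip.locallyLipschitzOn (s := S)).exists_lipschitzOnWith_of_compact hScomp
  have hlipS : ∀ x ∈ S, ∀ y ∈ S, ‖gradient f x - gradient f y‖ ≤ max 1 (L0 : ℝ) * ‖x - y‖ := by
    intro x hx y hy
    have := hL0.dist_le_mul x hx y hy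
    rw [dist_eq_norm, dist_eq_norm] at this
    exact this.trans (by gcongr; exact le_max_right _ _)
  obtain ⟨c, C, σ, m, hc, hC, hT, hWin⟩ := winH_path (ξ := ξ) (r := r) hfd hSconv (le_max_left 1 (L0:ℝ))
    (by linarith) hlipS hαpos hα0 hγ hαdiv hrec hθS
  have hW : ∀ B > X, ∀ ρ ≤ r, ∀ᶠ n in atTop,
      WinH c C B ρ γ (fun n => f (θ n)) (fun n => ‖gradient f (θ n)‖) m θ n :=
    fun B hB ρ hρ => hWin B (lt_of_le_of_lt hX hB) (hno B hB) ρ hρ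
  have hfS : IsCompact (f '' S) := hScomp.image hfd.continuous
  have hX1 : X < X + 1 := by linarith
  obtain ⟨ℓ, hℓ⟩ := F_conv hT hc hC (by linarith) hr (hW (X+1) hX1 r le_rfl) (by
    obtain ⟨b, hb⟩ := hfS.bddBelow
    exact ⟨b, fun n => hb ⟨θ n, hθS n, rfl⟩⟩)
  have hℓS : ℓ ∈ f '' S := hfS.isClosed.mem_of_tendsto hℓ (Eventually.of_forall fun n => ⟨θ n, hθS n, rfl⟩)
  have hconv : ∃ x, Tendsto θ atTop (nhds x) := by
    obtain ⟨δ, μ, M, hδ, hμ, hM, hl⟩ := hLoj S hScomp ℓ hℓS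
    obtain ⟨hρ1, hρ2, hρ3⟩ := rho_props hr hμ rfl
    set ρ := if μ < 2 then min r (1 / (2 - μ)) else r
    obtain ⟨K, hK, hev⟩ := caseI (B := X + 1) hT hc hC (by linarith) hμ.1 hμ.2 hρ1 (lt_of_lt_of_le one_pos hM)
      (fun n => norm_nonneg _) hρ3 (fun B' hB' => hW B' (by linarith) ρ hρ2)
      (by
        have := (Metric.tendsto_nhds.1 hℓ) δ hδ.1
        filter_upwards [this] with n hn
        exact hl _ (hθS n) (by rw [Real.dist_eq] at hn; exact hn.le)) hℓ
    apply cauchySeq_tendsto_of_complete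
    rw [Metric.cauchySeq_iff']
    intro ε hε
    have h0 : Tendsto (fun n => K * γ n ^ (-(ρ-1))) atTop (nhds (K * 0)) :=
      ((tendsto_rpow_neg_atTop (by linarith : 0 < ρ - 1)).comp hαdiv).const_mul K
    rw [mul_zero] at h0
    obtain ⟨N, hN, hN2⟩ := (hev.and (h0.eventually_lt_const hε)).exists
    exact ⟨N, fun n hn => by rw [dist_eq_norm]; exact lt_of_le_of_lt (hN.2.2 n hn) hN2⟩
  obtain ⟨x, hx⟩ := hconv
  have hℓx : ℓ = f x := tendsto_nhds_unique hℓ ((hfd.continuous.tendsto x).comp hx)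
  subst hℓx
  obtain ⟨hρ1, hρ2, hρ3⟩ := rho_props hr (hμl x) rfl
  have hLo : ∀ᶠ n in atTop, |f (θ n) - f x| ≤ Ml x * ‖gradient f (θ n)‖ ^ μl x := by
    filter_upwards [(Metric.tendsto_nhds.1 hx) (δl x) (hδl x).1] with n hn
    exact hLocal _ _ (by rw [dist_eq_norm] at hn; exact hn.le)
  have hM0 : 0 < Ml x := by linarith [hMl x]
  refine ⟨x, hx, ?_, ?_⟩
  · obtain ⟨K, hK, hev⟩ := caseI (B := X + 1) hT hc hC (by linarith) (hμl x).1 (hμl x).2 hρ1 hM0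
      (fun n => norm_nonneg _) hρ3 (fun B' hB' => hW B' (by linarith) _ hρ2) hLo hℓ
    exact ⟨K, hK, normalise hαdiv hx hev⟩
  · intro hX0 hor ε hε
    subst hX0
    have hlt : (if μl x < 2 then min r (1 / (2 - μl x)) else r) * (2 - μl x) < 1 := by
      rcases hor with h | h
      · rw [h]; norm_num
      · by_cases h2 : μl x < 2
        · rw [if_pos h2, min_eq_left h.le]
          rwa [lt_div_iff₀ (by linarith)] at h
        · have : μl x = 2 := le_antisymm (hμl x).2 (not_lt.1 h2)
          rw [this]; norm_num
    exact normalise hαdiv hx (caseII hT hc hC (hμl x).1 (hμl x).2 hρ1 hM0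
      (fun n => norm_nonneg _) hlt (fun B hB => hW B hB _ hρ2) hLo hℓ hε)

end SGR

/-- Theorem 1.2 of the paper: under Assumptions 1.1, 1.2, 1.3
there is a random variable `K̂` with `1 ≤ K̂ < ∞` everywhere such that, almost
surely on `Λ` (where `θ̂ = lim θ_n` exists),
`limsup γ_n^p̂ ‖∇f(θ_n)‖² ≤ K̂ (φ(ξ))^μ̂`,
`limsup γ_n^p̂ |f(θ_n) − f(θ̂)| ≤ K̂ (φ(ξ))^μ̂` and
`limsup γ_n^q̂ ‖θ_n − θ̂‖ ≤ K̂ φ(ξ)`.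
(`limsup u ≤ c` is expressed as: for every `c' > c`, eventually `u n ≤ c'`.) -/
theorem stochastic_gradient_convergence_rate
    {d : ℕ} (hd : 1 ≤ d)
    {Ω : Type} [MeasurableSpace Ω] (P : Measure Ω) [IsProbabilityMeasure P]
    (f : EuclideanSpace ℝ (Fin d) → ℝ)
    (hfd : Differentiable ℝ f)
    (hlip : LocallyLipschitz (fun x => gradient f x))
    (α : ℕ → ℝ) (hαpos : ∀ n, 0 < α n)
    (θ ξ : ℕ → Ω → EuclideanSpace ℝ (Fin d))
    (hrec : ∀ n ω, θ (n + 1) ω = θ n ω - α n • (gradient f (θ n ω) + ξ n ω))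
    -- Assumption 1.1
    (hα0 : Tendsto α atTop (nhds 0))
    (γ : ℕ → ℝ) (hγ : ∀ n, γ n = ∑ i ∈ Finset.range n, α i)
    (hαdiv : Tendsto γ atTop atTop)
    -- the interpolation index `a(n,t)`
    (a : ℕ → ℝ → ℕ)
    (ha : ∀ n t, 0 < t → a n t = sSup {k | n ≤ k ∧ γ k - γ n ≤ t})
    -- the event Λ
    (Λ : Set Ω) (hΛ : Λ = {ω | ∃ C, ∀ n, ‖θ n ω‖ ≤ C})
    -- Assumption 1.2
    (r : ℝ) (hr : 1 < r)
    (noise : ℕ → Ω → ℝ)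
    (hnoise : ∀ n ω, noise n ω =
      ⨆ k ∈ Set.Ico n (a n 1), ‖∑ i ∈ Finset.Icc n k, (α i * γ i ^ r) • ξ i ω‖)
    (hA12 : ∀ᵐ ω ∂P, ω ∈ Λ → IsBoundedUnder (· ≤ ·) atTop (fun n => noise n ω))
    (Xi : Ω → ℝ) (hXi : ∀ ω, Xi ω = Filter.limsup (fun n => noise n ω) atTop)
    -- Assumption 1.3 (Łojasiewicz-type gradient inequality)
    (hLoj : ∀ Q : Set (EuclideanSpace ℝ (Fin d)), IsCompact Q → ∀ b ∈ f '' Q,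
      ∃ δ μ M : ℝ, δ ∈ Set.Ioc (0 : ℝ) 1 ∧ μ ∈ Set.Ioc (1 : ℝ) 2 ∧ 1 ≤ M ∧
        ∀ x ∈ Q, |f x - b| ≤ δ → |f x - b| ≤ M * ‖gradient f x‖ ^ μ)
    -- the local Łojasiewicz data `δ_θ, μ_θ, M_θ` provided by Assumption 1.3
    (δl μl Ml : EuclideanSpace ℝ (Fin d) → ℝ)
    (hδl : ∀ x, δl x ∈ Set.Ioc (0 : ℝ) 1)
    (hμl : ∀ x, μl x ∈ Set.Ioc (1 : ℝ) 2)
    (hMl : ∀ x, 1 ≤ Ml x)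
    (hLocal : ∀ x y, ‖y - x‖ ≤ δl x → |f y - f x| ≤ Ml x * ‖gradient f y‖ ^ μl x)
    -- `min{r, r_θ}`, `p_θ = μ_θ min{r, r_θ}` and `q_θ = min{r, r_θ} − 1`
    (rmin p q : EuclideanSpace ℝ (Fin d) → ℝ)
    (hrmin : ∀ x, rmin x = if μl x < 2 then min r (1 / (2 - μl x)) else r)
    (hp : ∀ x, p x = μl x * rmin x)
    (hq : ∀ x, q x = rmin x - 1)
    -- `φ(ξ)`: equals `ξ` if `r < r_θ`, `1 + ξ` if `r = r_θ`, `1` if `r > r_θ`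
    (phi : EuclideanSpace ℝ (Fin d) → ℝ → ℝ)
    (hphi : ∀ x s, phi x s =
      if μl x = 2 ∨ r < 1 / (2 - μl x) then s
      else if r = 1 / (2 - μl x) then 1 + s else 1) :
    ∃ K : Ω → ℝ, (∀ ω, 1 ≤ K ω) ∧
      ∀ᵐ ω ∂P, ω ∈ Λ →
        ∃ θhat, Tendsto (fun n => θ n ω) atTop (nhds θhat) ∧
          (∀ c : ℝ, K ω * phi θhat (Xi ω) ^ μl θhat < c →
            ∀ᶠ n in atTop, γ n ^ p θhat * ‖gradient f (θ n ω)‖ ^ 2 ≤ c) ∧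
          (∀ c : ℝ, K ω * phi θhat (Xi ω) ^ μl θhat < c →
            ∀ᶠ n in atTop, γ n ^ p θhat * |f (θ n ω) - f θhat| ≤ c) ∧
          (∀ c : ℝ, K ω * phi θhat (Xi ω) < c →
            ∀ᶠ n in atTop, γ n ^ q θhat * ‖θ n ω - θhat‖ ≤ c) := by
  have key : ∀ ω, ∃ K : ℝ, 1 ≤ K ∧ (IsBoundedUnder (· ≤ ·) atTop (fun n => noise n ω) → ω ∈ Λ →
        ∃ θhat, Tendsto (fun n => θ n ω) atTop (nhds θhat) ∧
          (∀ c : ℝ, K * phi θhat (Xi ω) ^ μl θhat < c →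
            ∀ᶠ n in atTop, γ n ^ p θhat * ‖gradient f (θ n ω)‖ ^ 2 ≤ c) ∧
          (∀ c : ℝ, K * phi θhat (Xi ω) ^ μl θhat < c →
            ∀ᶠ n in atTop, γ n ^ p θhat * |f (θ n ω) - f θhat| ≤ c) ∧
          (∀ c : ℝ, K * phi θhat (Xi ω) < c →
            ∀ᶠ n in atTop, γ n ^ q θhat * ‖θ n ω - θhat‖ ≤ c)) := by
    intro ω
    by_cases hb : IsBoundedUnder (· ≤ ·) atTop (fun n => noise n ω)
    swap
    · exact ⟨1, le_rfl, fun h => absurd h hb⟩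
    by_cases hω : ω ∈ Λ
    swap
    · exact ⟨1, le_rfl, fun _ h => absurd h hω⟩
    have hω' := hω
    rw [hΛ] at hω'
    obtain ⟨R, hR⟩ := hω'
    have hn0 : ∀ n, 0 ≤ noise n ω := fun n => by rw [hnoise]; exact SGR.noise_nonneg
    have hX : 0 ≤ Xi ω := by
      rw [hXi]
      exact le_limsup_of_frequently_le (Frequently.of_forall hn0) hb
    obtain ⟨x, hx, ⟨K0, hK0, h1⟩, h2⟩ := SGR.path (θ := fun n => θ n ω) (ξ := fun n => ξ n ω)
      (X := Xi ω) hfd hlip hαpos (fun n => hrec n ω) hα0 hγ hαdiv hR hr hX (by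
        intro B hB
        rw [hXi] at hB
        filter_upwards [eventually_lt_of_limsup_lt hB hb] with n hn k hk hk1
        rw [hnoise] at hn
        exact (SGR.noise_bd hαdiv (ha n 1 one_pos) hk hk1).trans hn.le)
      hLoj hδl hμl hMl hLocal
    simp only [← hrmin, ← hp, ← hq] at h1 h2
    have hφ := hphi x (Xi ω)
    rcases le_or_gt (phi x (Xi ω)) 0 with hle | hpos
    · have hz : Xi ω = 0 ∧ (μl x = 2 ∨ r < 1 / (2 - μl x)) ∧ phi x (Xi ω) = 0 := by
        split_ifs at hφ with ha1 ha2
        · exact ⟨by linarith, ha1, by linarith⟩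
        · linarith
        · linarith
      obtain ⟨hz1, hz2, hz3⟩ := hz
      have hμ0 : μl x ≠ 0 := by have := (hμl x).1; linarith
      refine ⟨1, le_rfl, fun _ _ => ⟨x, hx, ?_, ?_, ?_⟩⟩ <;> intro c hc <;>
        simp only [hz3, Real.zero_rpow hμ0, mul_zero] at hc
      · exact (h2 hz1 hz2 c hc).mono fun n h => h.1
      · exact (h2 hz1 hz2 c hc).mono fun n h => h.2.1
      · exact (h2 hz1 hz2 c hc).mono fun n h => h.2.2
    · have hpp : 0 < phi x (Xi ω) ^ μl x := Real.rpow_pos_of_pos hpos _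
      refine ⟨max 1 (max (K0 / phi x (Xi ω) ^ μl x) (K0 / phi x (Xi ω))), le_max_left _ _,
        fun _ _ => ⟨x, hx, ?_⟩⟩
      set KK := max 1 (max (K0 / phi x (Xi ω) ^ μl x) (K0 / phi x (Xi ω))) with hKK
      have e1 : K0 ≤ KK * phi x (Xi ω) ^ μl x := by
        rw [← div_le_iff₀ hpp]; exact (le_max_left _ _).trans (le_max_right _ _)
      have e2 : K0 ≤ KK * phi x (Xi ω) := by
        rw [← div_le_iff₀ hpos]; exact (le_max_right _ _).trans (le_max_right _ _)
      refine ⟨fun c hc => h1.mono fun n h => ?_, fun c hc => h1.mono fun n h => ?_,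
        fun c hc => h1.mono fun n h => ?_⟩
      · exact h.1.trans (e1.trans hc.le)
      · exact h.2.1.trans (e1.trans hc.le)
      · exact h.2.2.trans (e2.trans hc.le)
  choose K hK1 hK2 using key
  refine ⟨K, hK1, ?_⟩
  filter_upwards [hA12] with ω h hω
  exact hK2 ω (h hω) hω
end
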